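/- arXiv:2511.00820 — 2 statements merged into one kernel-verified Lean document; each statement's English description precedes it below -/
import Mathlib

section
/- Fix d, n ∈ ℕ. Let X ∈ ℝ^{n×d} have i.i.d. N(0,1) entries and let g ∼ N(0, I_n) and h ∼ N(0, I_d) be Gaussian vectors with X, g, h independent. Let Q: ℝ × ℝ^d × ℝ^n × ℝ^n × ℝ^d → ℝ, (β₀, u, r, η, s) ↦ Q(β₀, u, r, η, s), be jointly continuous, convex in (β₀, u, r), and concave in (η, s). Fix compact sets A ⊆ ℝ × ℝ^d × ℝ^n and B ⊆ ℝ^n × ℝ^d, and define Φ = max_{(η,s)∈B} min_{(β₀,u,r)∈A} [ηᵀX u + Q(β₀, u, r, η, s)] and φ = max_{(η,s)∈B} min_{(β₀,u,r)∈A} [‖u‖₂ ηᵀg + ‖η‖₂ uᵀh + Q(β₀, u, r, η, s)]. Then for all c ∈ ℝ, P(Φ > c) ≤ 2·P(φ ≥ c). If in addition A and B are convex, then for all c ∈ ℝ, P(Φ < c) ≤ 2·P(φ ≤ c). -/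
open MeasureTheory ProbabilityTheory Filter

noncomputable section

/-- The standard Gaussian measure `N(0, I_d)` on `ℝ^d`. -/
def stdGaussian (d : ℕ) : Measure (Fin d → ℝ) := Measure.pi fun _ => gaussianReal 0 1

/-- The max–min value `Φ = max_{(η,s)∈B} min_{(β₀,u,r)∈A} [ηᵀ X u + Q(β₀,u,r,η,s)]`. -/
def gordonPhi {d n : ℕ} (X : Fin n → Fin d → ℝ)
    (Q : ℝ → (Fin d → ℝ) → (Fin n → ℝ) → (Fin n → ℝ) → (Fin d → ℝ) → ℝ)
    (A : Set (ℝ × (Fin d → ℝ) × (Fin n → ℝ)))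
    (B : Set ((Fin n → ℝ) × (Fin d → ℝ))) : ℝ :=
  sSup ((fun q : (Fin n → ℝ) × (Fin d → ℝ) =>
      sInf ((fun p : ℝ × (Fin d → ℝ) × (Fin n → ℝ) =>
        (∑ i, q.1 i * ∑ j, X i j * p.2.1 j) + Q p.1 p.2.1 p.2.2 q.1 q.2) '' A)) '' B)

/-- The auxiliary max–min value
`φ = max_{(η,s)∈B} min_{(β₀,u,r)∈A} [‖u‖₂ ηᵀg + ‖η‖₂ uᵀh + Q(β₀,u,r,η,s)]`. -/
def gordonphi {d n : ℕ} (g : Fin n → ℝ) (h : Fin d → ℝ)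
    (Q : ℝ → (Fin d → ℝ) → (Fin n → ℝ) → (Fin n → ℝ) → (Fin d → ℝ) → ℝ)
    (A : Set (ℝ × (Fin d → ℝ) × (Fin n → ℝ)))
    (B : Set ((Fin n → ℝ) × (Fin d → ℝ))) : ℝ :=
  sSup ((fun q : (Fin n → ℝ) × (Fin d → ℝ) =>
      sInf ((fun p : ℝ × (Fin d → ℝ) × (Fin n → ℝ) =>
        Real.sqrt (∑ j, p.2.1 j ^ 2) * (∑ i, q.1 i * g i)
          + Real.sqrt (∑ i, q.1 i ^ 2) * (∑ j, p.2.1 j * h j)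
          + Q p.1 p.2.1 p.2.2 q.1 q.2) '' A)) '' B)

/-!
Both parts compare the Gaussian process `ηᵀXu` with `‖u‖₂ ηᵀg + ‖η‖₂ uᵀh`. Adding
`γ ‖u‖₂ ‖η‖₂` to the former, with an independent standard Gaussian `γ`, equalises the covariances
whenever `u` or `η` is shared, and Cauchy–Schwarz orders all the others. For finitely many indices,
the probability that no row of an array lies entirely above its threshold is a limit of
expectations of smooth functions that are supermodular across rows. Rotation invariance gives
Stein's identity, so the derivative of such an expectation along the Gaussian interpolation between
the two arrays is a sum of covariance differences times mixed second derivatives, hence has a sign.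
Compact index sets are exhausted by finite ones. Since `γ ≥ 0` with probability at least `1/2`,
adding its term costs the factor `2`. A lower bound on the max–min value is an event about full
rows; an upper bound becomes one, with the two players exchanged, by Sion's minimax theorem.
-/

open scoped Topology

section TemperateGrowth

variable {E F : Type*} [NormedAddCommGroup E] [NormedSpace ℝ E]
  [NormedAddCommGroup F] [NormedSpace ℝ F]

lemma hasTemperateGrowth_fderiv {f : E → F} (hf : f.HasTemperateGrowth) :
    (fderiv ℝ f).HasTemperateGrowth := by
  refine ⟨(contDiff_infty_iff_fderiv.1 hf.1).2, fun k ↦ ?_⟩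
  obtain ⟨m, C, h⟩ := hf.2 (k + 1)
  refine ⟨m, C, fun x ↦ ?_⟩
  simpa only [iteratedFDeriv_succ_eq_comp_right, Function.comp_apply,
    LinearIsometryEquiv.norm_map] using h x

lemma hasTemperateGrowth_clm_apply {G : Type*} [NormedAddCommGroup G] [NormedSpace ℝ G]
    {f : E → F →L[ℝ] G} {g : E → F} (hf : f.HasTemperateGrowth) (hg : g.HasTemperateGrowth) :
    (fun x ↦ f x (g x)).HasTemperateGrowth :=
  (ContinuousLinearMap.id ℝ (F →L[ℝ] G)).bilinear_hasTemperateGrowth hf hg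

lemma hasTemperateGrowth_finset_prod {ι : Type*} (s : Finset ι) {f : ι → E → ℝ}
    (hf : ∀ i ∈ s, (f i).HasTemperateGrowth) :
    (fun x ↦ ∏ i ∈ s, f i x).HasTemperateGrowth := by
  induction s using Finset.cons_induction with
  | empty => simp
  | cons a s ha ih =>
    simp only [Finset.prod_cons]
    exact (hf a (Finset.mem_cons_self a s)).mul
      (ih fun i hi ↦ hf i (Finset.mem_cons_of_mem hi))

open scoped ContDiff in
lemma hasTemperateGrowth_smoothTransition : Real.smoothTransition.HasTemperateGrowth := by
  have hsmooth : ContDiff ℝ ∞ Real.smoothTransition := Real.smoothTransition.contDiff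
  refine .of_fderiv ?_ (hsmooth.differentiable (by simp)) (k := 0) (C := 1) fun x ↦ ?_
  · refine HasCompactSupport.hasTemperateGrowth ?_ (contDiff_infty_iff_fderiv.1 hsmooth).2
    refine .intro (isCompact_Icc (a := 0) (b := 1)) fun x hx ↦ ?_
    suffices ∃ c, Real.smoothTransition =ᶠ[𝓝 x] fun _ ↦ c by
      obtain ⟨c, hc⟩ := this
      rw [hc.fderiv_eq, fderiv_fun_const, Pi.zero_apply]
    rcases lt_or_ge x 0 with hx₀ | hx₀
    · exact ⟨0, (eventually_lt_nhds hx₀).mono fun y hy ↦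
        Real.smoothTransition.zero_of_nonpos hy.le⟩
    · have hx₁ : 1 < x := lt_of_not_ge fun hx₁ ↦ hx ⟨hx₀, hx₁⟩
      exact ⟨1, (eventually_gt_nhds hx₁).mono fun y hy ↦
        Real.smoothTransition.one_of_one_le hy.le⟩
  · simpa [abs_of_nonneg (Real.smoothTransition.nonneg x)] using Real.smoothTransition.le_one x

variable [MeasurableSpace E] [BorelSpace E] [SecondCountableTopology E] [CompleteSpace E]

lemma integrable_one_add_norm_pow (μ : Measure E) [IsGaussian μ] (k : ℕ) :
    Integrable (fun x ↦ (1 + ‖x‖) ^ k) μ := by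
  have hmem : MemLp (fun x : E ↦ 1 + ‖x‖) k μ :=
    (memLp_const (1 : ℝ)).add (IsGaussian.memLp_id μ k (ENNReal.natCast_ne_top k)).norm
  refine hmem.integrable_norm_pow'.congr (.of_forall fun x ↦ ?_)
  simp only [Real.norm_of_nonneg (show 0 ≤ 1 + ‖x‖ by positivity)]

lemma integrable_of_hasTemperateGrowth {μ : Measure E} [IsGaussian μ] {f : E → F}
    (hf : f.HasTemperateGrowth) : Integrable f μ := by
  obtain ⟨k, C, h⟩ := hf.2 0
  refine ((integrable_one_add_norm_pow μ k).const_mul C).mono'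
    hf.1.continuous.aestronglyMeasurable (.of_forall fun x ↦ ?_)
  simpa only [norm_iteratedFDeriv_zero] using h x

end TemperateGrowth

section GaussianCalculus

variable {E F : Type*}
  [NormedAddCommGroup E] [NormedSpace ℝ E] [CompleteSpace E] [SecondCountableTopology E]
  [MeasurableSpace E] [BorelSpace E]
  [NormedAddCommGroup F] [NormedSpace ℝ F]

lemma hasDerivAt_cos_smul_add_sin_smul (u v : F) (θ : ℝ) :
    HasDerivAt (fun θ ↦ Real.cos θ • u + Real.sin θ • v)
      (-Real.sin θ • u + Real.cos θ • v) θ :=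
  ((Real.hasDerivAt_cos θ).smul_const u).add ((Real.hasDerivAt_sin θ).smul_const v)

lemma norm_cos_smul_add_sin_smul_le (u v : F) (θ : ℝ) :
    ‖Real.cos θ • u + Real.sin θ • v‖ ≤ ‖u‖ + ‖v‖ := by
  refine (norm_add_le _ _).trans ?_
  rw [norm_smul, norm_smul]
  gcongr <;> refine mul_le_of_le_one_left (norm_nonneg _) ?_
  · exact Real.abs_cos_le_one θ
  · exact Real.abs_sin_le_one θ

lemma norm_neg_sin_smul_add_cos_smul_le (u v : F) (θ : ℝ) :
    ‖-Real.sin θ • u + Real.cos θ • v‖ ≤ ‖u‖ + ‖v‖ := by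
  simpa [add_comm] using norm_cos_smul_add_sin_smul_le v (-u) θ

lemma hasDerivAt_integral_comp_cos_smul_add_sin_smul (μ : Measure E) [IsGaussian μ]
    (A B : E →L[ℝ] F) {f : F → ℝ} (hf : f.HasTemperateGrowth) (θ : ℝ) :
    HasDerivAt (fun θ ↦ ∫ x, f (Real.cos θ • A x + Real.sin θ • B x) ∂μ)
      (∫ x, fderiv ℝ f (Real.cos θ • A x + Real.sin θ • B x)
        (-Real.sin θ • A x + Real.cos θ • B x) ∂μ) θ := by
  have hf' : (fderiv ℝ f).HasTemperateGrowth := hasTemperateGrowth_fderiv hf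
  have hcont : Continuous f := hf.1.continuous
  have hcont' : Continuous (fderiv ℝ f) := hf'.1.continuous
  obtain ⟨k, C, hC⟩ := hf'.2 0
  have hC₀ : 0 ≤ C := by simpa using (norm_nonneg _).trans (hC 0)
  set M := 1 + ‖A‖ + ‖B‖
  have hM (x : E) : 1 + (‖A x‖ + ‖B x‖) ≤ M * (1 + ‖x‖) := by
    nlinarith [A.le_opNorm x, B.le_opNorm x, norm_nonneg A, norm_nonneg B, norm_nonneg x]
  have hbound (x : E) (t : ℝ) : ‖fderiv ℝ f (Real.cos t • A x + Real.sin t • B x)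
      (-Real.sin t • A x + Real.cos t • B x)‖ ≤ C * M ^ (k + 1) * (1 + ‖x‖) ^ (k + 1) := by
    set z := Real.cos t • A x + Real.sin t • B x
    have hz : 1 + ‖z‖ ≤ M * (1 + ‖x‖) :=
      (add_le_add_right (norm_cos_smul_add_sin_smul_le (A x) (B x) t) 1).trans (hM x)
    have hfz : ‖fderiv ℝ f z‖ ≤ C * (1 + ‖z‖) ^ k := by
      simpa only [norm_iteratedFDeriv_zero] using hC z
    have hz' : ‖-Real.sin t • A x + Real.cos t • B x‖ ≤ M * (1 + ‖x‖) := by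
      linarith [norm_neg_sin_smul_add_cos_smul_le (A x) (B x) t, hM x]
    calc ‖fderiv ℝ f z (-Real.sin t • A x + Real.cos t • B x)‖
        ≤ ‖fderiv ℝ f z‖ * ‖-Real.sin t • A x + Real.cos t • B x‖ :=
          ContinuousLinearMap.le_opNorm _ _
      _ ≤ (C * (1 + ‖z‖) ^ k) * (M * (1 + ‖x‖)) := by gcongr
      _ ≤ (C * (M * (1 + ‖x‖)) ^ k) * (M * (1 + ‖x‖)) := by gcongr
      _ = C * M ^ (k + 1) * (1 + ‖x‖) ^ (k + 1) := by rw [mul_pow]; ring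
  have hderiv (x : E) (t : ℝ) := (hf.1.differentiable (by simp)).differentiableAt.hasFDerivAt
    |>.comp_hasDerivAt t (hasDerivAt_cos_smul_add_sin_smul (A x) (B x) t)
  exact (hasDerivAt_integral_of_dominated_loc_of_deriv_le
    (F := fun t x ↦ f (Real.cos t • A x + Real.sin t • B x)) univ_mem
    (.of_forall fun t ↦ Continuous.aestronglyMeasurable (by fun_prop))
    (integrable_of_hasTemperateGrowth <| hf.comp (by fun_prop))
    (Continuous.aestronglyMeasurable (by fun_prop)) (.of_forall fun x t _ ↦ hbound x t)
    ((integrable_one_add_norm_pow μ (k + 1)).const_mul _)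
    (.of_forall fun x t _ ↦ hderiv x t)).2

/-- A Gaussian measure with mean zero, expressed through the continuous linear functionals. -/
class IsCenteredGaussian {E : Type*} [NormedAddCommGroup E] [NormedSpace ℝ E] [MeasurableSpace E]
    (μ : Measure E) : Prop extends IsGaussian μ where
  integral_dual_eq_zero (L : StrongDual ℝ E) : ∫ x, L x ∂μ = 0

instance isCenteredGaussian_prod [SecondCountableTopology F] [MeasurableSpace F]
    [BorelSpace F] (μ : Measure E) (ν : Measure F) [IsCenteredGaussian μ] [IsCenteredGaussian ν] :
    IsCenteredGaussian (μ.prod ν) where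
  integral_dual_eq_zero L := by
    have hL (z : E × F) : L z = L.comp (.inl ℝ E F) z.1 + L.comp (.inr ℝ E F) z.2 := by
      simp [← map_add]
    simp_rw [hL]
    rw [integral_add ((IsGaussian.integrable_dual μ _).comp_fst ν)
      ((IsGaussian.integrable_dual ν _).comp_snd μ), integral_fun_fst, integral_fun_snd]
    simp only [IsCenteredGaussian.integral_dual_eq_zero, smul_zero, add_zero]

lemma integral_rotation {μ : Measure E} [IsCenteredGaussian μ] {f : E × E → ℝ}
    (hf : Continuous f) (θ : ℝ) :
    ∫ z, f (Real.cos θ • z + Real.sin θ • (z.2, -z.1)) ∂(μ.prod μ) = ∫ z, f z ∂(μ.prod μ) := by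
  conv_rhs => rw [← IsGaussian.map_rotation_eq_self_of_forall_strongDual_eq_zero
    IsCenteredGaussian.integral_dual_eq_zero θ,
    integral_map (by fun_prop) hf.aestronglyMeasurable]
  congr! 3 with z
  ext <;> simp [ContinuousLinearMap.rotation_apply, add_comm]

/-- **Stein's identity** in divergence form, obtained by differentiating at angle zero the rotation
invariance of the law of two independent copies. -/
theorem integral_apply_self_eq_integral_fderiv (μ : Measure E) [IsCenteredGaussian μ]
    {f : E → E →L[ℝ] ℝ} (hf : f.HasTemperateGrowth) :
    ∫ x, f x x ∂μ = ∫ x, ∫ y, fderiv ℝ f x y y ∂μ ∂μ := by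
  let f₂ : E × E → ℝ := fun z ↦ f z.1 z.2
  have hfst : Function.HasTemperateGrowth (Prod.fst : E × E → E) :=
    (ContinuousLinearMap.fst ℝ E E).hasTemperateGrowth
  have hsnd : Function.HasTemperateGrowth (Prod.snd : E × E → E) :=
    (ContinuousLinearMap.snd ℝ E E).hasTemperateGrowth
  have hf₂ : f₂.HasTemperateGrowth := hasTemperateGrowth_clm_apply (hf.comp hfst) hsnd
  have hf₂' (z : E × E) :
      fderiv ℝ f₂ z (z.2, -z.1) = fderiv ℝ f z.1 z.2 z.2 - f z.1 z.1 := by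
    have hfz : HasFDerivAt f (fderiv ℝ f z.1) z.1 :=
      (hf.1.differentiable (by simp)).differentiableAt.hasFDerivAt
    have hf₂z : HasFDerivAt f₂ _ z := (hfz.comp z hasFDerivAt_fst).clm_apply hasFDerivAt_snd
    rw [hf₂z.fderiv]
    simp [sub_eq_neg_add]
  have hderiv := hasDerivAt_integral_comp_cos_smul_add_sin_smul (μ.prod μ) (.id ℝ (E × E))
    ((ContinuousLinearMap.snd ℝ E E).prod (-ContinuousLinearMap.fst ℝ E E)) hf₂ 0
  have hzero : ∫ z, fderiv ℝ f₂ z (z.2, -z.1) ∂(μ.prod μ) = 0 := by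
    have hconst := (hasDerivAt_const (0 : ℝ) (∫ z, f₂ z ∂(μ.prod μ))).congr_of_eventuallyEq
      (.of_forall fun θ ↦ integral_rotation hf₂.1.continuous θ)
    simpa using hderiv.unique hconst
  have hint₁ : Integrable (fun z : E × E ↦ fderiv ℝ f z.1 z.2 z.2) (μ.prod μ) :=
    integrable_of_hasTemperateGrowth <| hasTemperateGrowth_clm_apply
      (hasTemperateGrowth_clm_apply ((hasTemperateGrowth_fderiv hf).comp hfst) hsnd) hsnd
  have hint₂ : Integrable (fun z : E × E ↦ f z.1 z.1) (μ.prod μ) :=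
    integrable_of_hasTemperateGrowth <| hasTemperateGrowth_clm_apply (hf.comp hfst) hfst
  have hfst_map : ∫ z : E × E, f z.1 z.1 ∂(μ.prod μ) = ∫ x, f x x ∂μ := by
    simpa using integral_fun_fst (μ := μ) (ν := μ) fun x ↦ f x x
  simp_rw [hf₂'] at hzero
  rw [integral_sub hint₁ hint₂, integral_prod _ hint₁, hfst_map, sub_eq_zero] at hzero
  exact hzero.symm

variable {μ ν : Measure E} [IsCenteredGaussian μ] [IsCenteredGaussian ν]

lemma integral_bilinear_cos_sin_eq (H : E →L[ℝ] E →L[ℝ] ℝ) (θ : ℝ) :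
    ∫ p, H (Real.cos θ • p.2 + Real.sin θ • p.1) (-Real.sin θ • p.2 + Real.cos θ • p.1)
        ∂(μ.prod ν) =
      Real.sin θ * Real.cos θ * (∫ x, H x x ∂μ - ∫ y, H y y ∂ν) := by
  have hfst := IsCenteredGaussian.integral_dual_eq_zero (μ := μ)
  have hsnd := IsCenteredGaussian.integral_dual_eq_zero (μ := ν)
  let c := Real.cos θ
  let s := Real.sin θ
  have htg {A B : E × E →L[ℝ] E} : Integrable (fun p ↦ H (A p) (B p)) (μ.prod ν) :=
    integrable_of_hasTemperateGrowth (H.bilinear_hasTemperateGrowth A.hasTemperateGrowth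
      B.hasTemperateGrowth)
  have h₁₁ : Integrable (fun p : E × E ↦ H p.1 p.1) (μ.prod ν) :=
    htg (A := .fst ℝ E E) (B := .fst ℝ E E)
  have h₁₂ : Integrable (fun p : E × E ↦ H p.1 p.2) (μ.prod ν) :=
    htg (A := .fst ℝ E E) (B := .snd ℝ E E)
  have h₂₁ : Integrable (fun p : E × E ↦ H p.2 p.1) (μ.prod ν) :=
    htg (A := .snd ℝ E E) (B := .fst ℝ E E)
  have h₂₂ : Integrable (fun p : E × E ↦ H p.2 p.2) (μ.prod ν) :=
    htg (A := .snd ℝ E E) (B := .snd ℝ E E)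
  have hexpand (p : E × E) : H (c • p.2 + s • p.1) (-s • p.2 + c • p.1) =
      s * c * (H p.1 p.1 - H p.2 p.2) + (c ^ 2 * H p.2 p.1 - s ^ 2 * H p.1 p.2) := by
    simp only [map_add, map_smul, add_apply, smul_apply, smul_eq_mul]
    ring
  have e₁₂ : ∫ p, H p.1 p.2 ∂(μ.prod ν) = 0 := by
    simp [integral_prod _ h₁₂, hsnd]
  have e₂₁ : ∫ p, H p.2 p.1 ∂(μ.prod ν) = 0 := by
    simp [integral_prod_symm _ h₂₁, hfst]
  have e₁₁ : ∫ p : E × E, H p.1 p.1 ∂(μ.prod ν) = ∫ x, H x x ∂μ := by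
    simpa using integral_fun_fst (μ := μ) (ν := ν) fun x ↦ H x x
  have e₂₂ : ∫ p : E × E, H p.2 p.2 ∂(μ.prod ν) = ∫ y, H y y ∂ν := by
    simpa using integral_fun_snd (μ := μ) (ν := ν) fun x ↦ H x x
  have hdiag : Integrable (fun p : E × E ↦ s * c * (H p.1 p.1 - H p.2 p.2)) (μ.prod ν) :=
    (h₁₁.sub h₂₂).const_mul _
  have hcross : Integrable (fun p : E × E ↦ c ^ 2 * H p.2 p.1 - s ^ 2 * H p.1 p.2) (μ.prod ν) :=
    (h₂₁.const_mul _).sub (h₁₂.const_mul _)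
  rw [integral_congr_ae (.of_forall hexpand), integral_add hdiag hcross,
    integral_const_mul, integral_sub h₁₁ h₂₂, integral_sub (h₂₁.const_mul _) (h₁₂.const_mul _),
    integral_const_mul, integral_const_mul, e₁₁, e₂₂, e₁₂, e₂₁]
  ring

lemma hasDerivAt_integral_gaussian_interpolation {f : E → ℝ} (hf : f.HasTemperateGrowth) (θ : ℝ) :
    HasDerivAt (fun θ ↦ ∫ p, f (Real.cos θ • p.2 + Real.sin θ • p.1) ∂(μ.prod ν))
      (Real.sin θ * Real.cos θ * ∫ p,
        (∫ x, fderiv ℝ (fderiv ℝ f) (Real.cos θ • p.2 + Real.sin θ • p.1) x x ∂μ -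
          ∫ y, fderiv ℝ (fderiv ℝ f) (Real.cos θ • p.2 + Real.sin θ • p.1) y y ∂ν)
        ∂(μ.prod ν)) θ := by
  let Z : E × E →L[ℝ] E :=
    Real.cos θ • ContinuousLinearMap.snd ℝ E E + Real.sin θ • ContinuousLinearMap.fst ℝ E E
  let Z' : E × E →L[ℝ] E :=
    -Real.sin θ • ContinuousLinearMap.snd ℝ E E + Real.cos θ • ContinuousLinearMap.fst ℝ E E
  have hf' : (fderiv ℝ f).HasTemperateGrowth := hasTemperateGrowth_fderiv hf
  let G : E × E → E × E →L[ℝ] ℝ := fun p ↦ (fderiv ℝ f (Z p)).comp Z'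
  have hG : G.HasTemperateGrowth := by
    exact ((ContinuousLinearMap.compL ℝ (E × E) E ℝ).flip Z').hasTemperateGrowth.comp
      (hf'.comp Z.hasTemperateGrowth)
  have hG' (p q : E × E) : fderiv ℝ G p q q = fderiv ℝ (fderiv ℝ f) (Z p) (Z q) (Z' q) := by
    have hfp : HasFDerivAt (fderiv ℝ f) (fderiv ℝ (fderiv ℝ f) (Z p)) (Z p) :=
      (hf'.1.differentiable (by simp)).differentiableAt.hasFDerivAt
    have hGp : HasFDerivAt G _ p :=
      ((ContinuousLinearMap.compL ℝ (E × E) E ℝ).flip Z').hasFDerivAt.comp p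
        (hfp.comp p Z.hasFDerivAt)
    rw [hGp.fderiv]
    rfl
  have hderiv := hasDerivAt_integral_comp_cos_smul_add_sin_smul (μ.prod ν)
    (ContinuousLinearMap.snd ℝ E E) (ContinuousLinearMap.fst ℝ E E) hf θ
  have hstein := integral_apply_self_eq_integral_fderiv (μ.prod ν) hG
  simp_rw [hG'] at hstein
  rw [← integral_const_mul]
  refine hderiv.congr_deriv (hstein.trans ?_)
  exact integral_congr_ae (.of_forall fun p ↦ integral_bilinear_cos_sin_eq _ θ)

theorem integral_le_integral_of_fderiv_fderiv_le {f : E → ℝ} (hf : f.HasTemperateGrowth)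
    (h : ∀ z, ∫ y, fderiv ℝ (fderiv ℝ f) z y y ∂ν ≤ ∫ x, fderiv ℝ (fderiv ℝ f) z x x ∂μ) :
    ∫ y, f y ∂ν ≤ ∫ x, f x ∂μ := by
  let φ : ℝ → ℝ := fun θ ↦ ∫ p, f (Real.cos θ • p.2 + Real.sin θ • p.1) ∂(μ.prod ν)
  have hderiv (θ : ℝ) := hasDerivAt_integral_gaussian_interpolation (μ := μ) (ν := ν) hf θ
  have hpi : 0 ≤ Real.pi / 2 := by positivity
  have hmono : MonotoneOn φ (Set.Icc 0 (Real.pi / 2)) := by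
    refine monotoneOn_of_hasDerivWithinAt_nonneg (convex_Icc _ _)
      (fun θ _ ↦ (hderiv θ).continuousAt.continuousWithinAt)
      (fun θ _ ↦ (hderiv θ).hasDerivWithinAt) fun θ hθ ↦ ?_
    rw [interior_Icc] at hθ
    have hsin : 0 ≤ Real.sin θ := Real.sin_nonneg_of_nonneg_of_le_pi hθ.1.le (by linarith [hθ.2])
    have hcos : 0 ≤ Real.cos θ := Real.cos_nonneg_of_mem_Icc ⟨by linarith [hθ.1], hθ.2.le⟩
    exact mul_nonneg (mul_nonneg hsin hcos) (integral_nonneg fun p ↦ sub_nonneg.2 (h _))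
  simpa [φ, integral_fun_fst, integral_fun_snd] using
    hmono (Set.left_mem_Icc.2 hpi) (Set.right_mem_Icc.2 hpi) hpi

end GaussianCalculus

section CenteredGaussian

instance isCenteredGaussian_gaussianReal (v : NNReal) : IsCenteredGaussian (gaussianReal 0 v) where
  integral_dual_eq_zero L := by
    have hL (x : ℝ) : L x = x * L 1 := by rw [← smul_eq_mul, ← map_smul, smul_eq_mul, mul_one]
    rw [integral_congr_ae (.of_forall hL), integral_mul_const, integral_id_gaussianReal, zero_mul]

instance isCenteredGaussian_map {E F : Type*}
    [NormedAddCommGroup E] [NormedSpace ℝ E] [MeasurableSpace E] [BorelSpace E]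
    [NormedAddCommGroup F] [NormedSpace ℝ F] [MeasurableSpace F] [BorelSpace F]
    (μ : Measure E) [IsCenteredGaussian μ] (L : E →L[ℝ] F) : IsCenteredGaussian (μ.map L) where
  integral_dual_eq_zero L' := by
    rw [integral_map (by fun_prop) (by fun_prop)]
    exact IsCenteredGaussian.integral_dual_eq_zero (L'.comp L)

instance isCenteredGaussian_pi {ι : Type*} [Fintype ι] {E : ι → Type*}
    [∀ i, NormedAddCommGroup (E i)] [∀ i, NormedSpace ℝ (E i)] [∀ i, MeasurableSpace (E i)]
    [∀ i, BorelSpace (E i)] [∀ i, SecondCountableTopology (E i)] [∀ i, CompleteSpace (E i)]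
    (μ : ∀ i, Measure (E i)) [∀ i, IsCenteredGaussian (μ i)] :
    IsCenteredGaussian (Measure.pi μ) where
  toIsGaussian := by
    have heval (i : ι) : HasGaussianLaw (fun x : ∀ i, E i ↦ x i) (Measure.pi μ) :=
      ⟨by rw [(measurePreserving_eval μ i).map_eq]; infer_instance⟩
    have hid : HasGaussianLaw (fun x ↦ x) (Measure.pi μ) :=
      (iIndepFun_pi (μ := μ) (X := fun i ↦ id) fun i ↦ aemeasurable_id).hasGaussianLaw heval
    simpa only [Measure.map_id'] using hid.isGaussian_map
  integral_dual_eq_zero L := by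
    classical
    have hL (x : ∀ i, E i) : L x = ∑ i, L.comp (.single ℝ E i) (x i) := by
      conv_lhs => rw [← Finset.univ_sum_single x, map_sum]
      rfl
    simp_rw [hL]
    rw [integral_finsetSum _ fun i _ ↦
      integrable_comp_eval (i := i) (IsGaussian.integrable_dual (μ i) (L.comp (.single ℝ E i)))]
    refine Finset.sum_eq_zero fun i _ ↦ ?_
    rw [integral_comp_eval (i := i) (by fun_prop)]
    exact IsCenteredGaussian.integral_dual_eq_zero _

lemma covariance_dual_eq_integral_mul {E : Type*} [NormedAddCommGroup E] [NormedSpace ℝ E]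
    [MeasurableSpace E] {μ : Measure E} [IsCenteredGaussian μ]
    (L L' : StrongDual ℝ E) :
    cov[L, L'; μ] = ∫ x, L x * L' x ∂μ := by
  simp only [covariance, IsCenteredGaussian.integral_dual_eq_zero, sub_zero]

end CenteredGaussian

section Covariance

lemma covariance_neg_neg {Ω : Type*} [MeasurableSpace Ω] {μ : Measure Ω} (X Y : Ω → ℝ) :
    cov[-X, -Y; μ] = cov[X, Y; μ] := by
  rw [covariance_neg_left, covariance_neg_right, neg_neg]

lemma covariance_sum_pi {ι : Type*} [Fintype ι] {Ω : ι → Type*} [∀ i, MeasurableSpace (Ω i)]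
    {μ : ∀ i, Measure (Ω i)} [∀ i, IsProbabilityMeasure (μ i)] {X Y : ∀ i, Ω i → ℝ}
    (hX : ∀ i, MemLp (X i) 2 (μ i)) (hY : ∀ i, MemLp (Y i) 2 (μ i)) :
    cov[fun ω ↦ ∑ i, X i (ω i), fun ω ↦ ∑ i, Y i (ω i); Measure.pi μ] =
      ∑ i, cov[X i, Y i; μ i] := by
  have heval (i : ι) := measurePreserving_eval μ i
  have hX' (i : ι) := (hX i).comp_measurePreserving (heval i)
  have hY' (i : ι) := (hY i).comp_measurePreserving (heval i)
  have hoff (i j : ι) (hij : i ≠ j) :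
      cov[fun ω ↦ X i (ω i), fun ω ↦ Y j (ω j); Measure.pi μ] = 0 :=
    ((iIndepFun_pi fun i ↦ (hX i).aemeasurable.prodMk (hY i).aemeasurable).indepFun hij
      |>.comp measurable_fst measurable_snd).covariance_eq_zero (hX' i) (hY' j)
  have hdiag (i : ι) : cov[fun ω ↦ X i (ω i), fun ω ↦ Y i (ω i); Measure.pi μ] =
      cov[X i, Y i; μ i] :=
    (heval i).hasLaw.covariance_fun_comp (hX i).aemeasurable (hY i).aemeasurable
  refine (covariance_fun_sum_fun_sum hX' hY').trans (Finset.sum_congr rfl fun i _ ↦ ?_)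
  exact (Finset.sum_eq_single i (fun j _ hji ↦ hoff i j hji.symm) (by simp)).trans (hdiag i)

lemma covariance_add_prod {Ω Ω' : Type*} [MeasurableSpace Ω] [MeasurableSpace Ω']
    {μ : Measure Ω} {ν : Measure Ω'} [IsProbabilityMeasure μ] [IsProbabilityMeasure ν]
    {X X' : Ω → ℝ} {Y Y' : Ω' → ℝ} (hX : MemLp X 2 μ) (hX' : MemLp X' 2 μ)
    (hY : MemLp Y 2 ν) (hY' : MemLp Y' 2 ν) :
    cov[fun z ↦ X z.1 + Y z.2, fun z ↦ X' z.1 + Y' z.2; μ.prod ν] =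
      cov[X, X'; μ] + cov[Y, Y'; ν] := by
  have hfst := hX.comp_fst ν
  have hfst' := hX'.comp_fst ν
  have hsnd := hY.comp_snd μ
  have hsnd' := hY'.comp_snd μ
  refine (covariance_add_left hfst hsnd (hfst'.add hsnd')).trans ?_
  rw [covariance_add_right hfst hfst' hsnd', covariance_add_right hsnd hfst' hsnd',
    covariance_fst_snd_prod hX hY', covariance_comm (fun z : Ω × Ω' ↦ Y z.2),
    covariance_fst_snd_prod hX' hY, zero_add, add_zero]
  congr 1
  · exact measurePreserving_fst.hasLaw.covariance_fun_comp hX.aemeasurable hX'.aemeasurable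
  · exact measurePreserving_snd.hasLaw.covariance_fun_comp hY.aemeasurable hY'.aemeasurable

end Covariance

section Supermodular

variable {E : Type*} [NormedAddCommGroup E] [NormedSpace ℝ E]

lemma fderiv_apply_nonneg_of_le {f : E → ℝ} {z v : E} (hf : DifferentiableAt ℝ f z)
    (h : ∀ t : ℝ, 0 ≤ t → f z ≤ f (z + t • v)) : 0 ≤ fderiv ℝ f z v := by
  have hmin : IsMinOn f ((fun t : ℝ ↦ z + t • v) '' Set.Icc 0 1) z := by
    rintro _ ⟨t, ht, rfl⟩
    exact h t ht.1
  refine hmin.localize.hasFDerivWithinAt_nonneg hf.hasFDerivAt.hasFDerivWithinAt ?_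
  refine mem_posTangentConeAt_of_segment_subset ?_
  rw [segment_eq_image']
  simp only [add_sub_cancel_left]
  rfl

lemma fderiv_fderiv_apply_nonneg_of_supermodular {f : E → ℝ} (hf : ContDiff ℝ 2 f) {a b : E}
    (h : ∀ (z : E) (s t : ℝ), 0 ≤ s → 0 ≤ t →
      f (z + s • a) + f (z + t • b) ≤ f (z + s • a + t • b) + f z) (z : E) :
    0 ≤ fderiv ℝ (fderiv ℝ f) z b a := by
  have hdiff : Differentiable ℝ f := hf.differentiable two_ne_zero
  have hdiff' : Differentiable ℝ (fderiv ℝ f) :=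
    (hf.fderiv_right (m := 1) le_rfl).differentiable one_ne_zero
  have hmono (t : ℝ) (ht : 0 ≤ t) : fderiv ℝ f z a ≤ fderiv ℝ f (z + t • b) a := by
    have hsub : HasFDerivAt (fun w ↦ f (w + t • b) - f w)
        (fderiv ℝ f (z + t • b) - fderiv ℝ f z) z :=
      ((hasFDerivAt_comp_add_right (t • b)).2 (hdiff _).hasFDerivAt).sub (hdiff z).hasFDerivAt
    have hnonneg : 0 ≤ fderiv ℝ (fun w ↦ f (w + t • b) - f w) z a :=
      fderiv_apply_nonneg_of_le hsub.differentiableAt fun s hs ↦ by linarith [h z s t hs ht]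
    rw [hsub.fderiv, sub_apply] at hnonneg
    exact sub_nonneg.1 hnonneg
  have heval : HasFDerivAt (fun w ↦ fderiv ℝ f w a)
      ((ContinuousLinearMap.apply ℝ ℝ a).comp (fderiv ℝ (fderiv ℝ f) z)) z :=
    (ContinuousLinearMap.apply ℝ ℝ a).hasFDerivAt.comp z (hdiff' z).hasFDerivAt
  have hnonneg := fderiv_apply_nonneg_of_le heval.differentiableAt hmono
  rwa [heval.fderiv] at hnonneg

end Supermodular

section NoFullRow

variable {J I : Type*} [Fintype J] [Fintype I]

/-- If each `σ (j, i)` approximates the indicator function of a set of reals, then `noFullRow σ`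
approximates the indicator function of the event that no row `j` of the array `z` has all its
entries in the corresponding sets. -/
def noFullRow (σ : J × I → ℝ → ℝ) (z : J × I → ℝ) : ℝ :=
  ∏ j, (1 - ∏ i, σ (j, i) (z (j, i)))

lemma hasTemperateGrowth_noFullRow {σ : J × I → ℝ → ℝ} (hσ : ∀ a, (σ a).HasTemperateGrowth) :
    (noFullRow σ).HasTemperateGrowth := by
  refine hasTemperateGrowth_finset_prod _ fun j _ ↦ ?_
  refine (Function.HasTemperateGrowth.const 1).sub (hasTemperateGrowth_finset_prod _ fun i _ ↦ ?_)
  exact (hσ (j, i)).comp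
    (ContinuousLinearMap.proj (R := ℝ) (φ := fun _ : J × I ↦ ℝ) (j, i)).hasTemperateGrowth

variable {σ : J × I → ℝ → ℝ}

lemma noFullRow_mem_Icc (hσ : ∀ a t, σ a t ∈ Set.Icc 0 1) (z : J × I → ℝ) :
    noFullRow σ z ∈ Set.Icc 0 1 := by
  have hrow (j : J) : ∏ i, σ (j, i) (z (j, i)) ∈ Set.Icc (0 : ℝ) 1 :=
    ⟨Finset.prod_nonneg fun i _ ↦ (hσ _ _).1,
      Finset.prod_le_one (fun i _ ↦ (hσ _ _).1) fun i _ ↦ (hσ _ _).2⟩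
  exact ⟨Finset.prod_nonneg fun j _ ↦ sub_nonneg.2 (hrow j).2,
    Finset.prod_le_one (fun j _ ↦ sub_nonneg.2 (hrow j).2) fun j _ ↦ sub_le_self _ (hrow j).1⟩

/-- Different rows enter `noFullRow` through different factors, each of them antitone. -/
lemma noFullRow_supermodular [DecidableEq J] [DecidableEq I] (hσ : ∀ a t, σ a t ∈ Set.Icc 0 1)
    (hσm : ∀ a, Monotone (σ a)) {a b : J × I} (hab : a.1 ≠ b.1) (z : J × I → ℝ) {s t : ℝ}
    (hs : 0 ≤ s) (ht : 0 ≤ t) :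
    noFullRow σ (z + s • Pi.single a 1) + noFullRow σ (z + t • Pi.single b 1) ≤
      noFullRow σ (z + s • Pi.single a 1 + t • Pi.single b 1) + noFullRow σ z := by
  let row (j : J) (w : J × I → ℝ) : ℝ := 1 - ∏ i, σ (j, i) (w (j, i))
  let rest (w : J × I → ℝ) : ℝ := ∏ j ∈ (Finset.univ.erase a.1).erase b.1, row j w
  have hsplit (w : J × I → ℝ) : noFullRow σ w = row a.1 w * (row b.1 w * rest w) := by
    rw [Finset.mul_prod_erase _ (row · w) (by simp [hab.symm]),
      Finset.mul_prod_erase _ (row · w) (Finset.mem_univ _)]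
    rfl
  have hrow_add (j : J) (w : J × I → ℝ) (c : J × I) (r : ℝ) (hc : j ≠ c.1) :
      row j (w + r • Pi.single c 1) = row j w := by
    have hne (i : I) : (j, i) ≠ c := fun h ↦ hc (congrArg Prod.fst h)
    simp [row, hne]
  have hrow_le (j : J) (w : J × I → ℝ) (c : J × I) (r : ℝ) (hr : 0 ≤ r) :
      row j (w + r • Pi.single c 1) ≤ row j w := by
    have hsingle : (0 : J × I → ℝ) ≤ r • Pi.single c 1 :=
      smul_nonneg hr (Pi.single_nonneg.2 zero_le_one)
    exact sub_le_sub_left (Finset.prod_le_prod (fun i _ ↦ (hσ _ _).1) fun i _ ↦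
      hσm _ (le_add_of_nonneg_right (hsingle _))) 1
  have hrest_add (w : J × I → ℝ) (c : J × I) (r : ℝ) (hc : c = a ∨ c = b) :
      rest (w + r • Pi.single c 1) = rest w := by
    refine Finset.prod_congr rfl fun j hj ↦ hrow_add j w c r ?_
    rcases hc with rfl | rfl <;> grind
  have hrest : 0 ≤ rest z := Finset.prod_nonneg fun j _ ↦
    sub_nonneg.2 (Finset.prod_le_one (fun i _ ↦ (hσ _ _).1) fun i _ ↦ (hσ _ _).2)
  have hprod := mul_nonneg (mul_nonneg (sub_nonneg.2 (hrow_le a.1 z a s hs))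
    (sub_nonneg.2 (hrow_le b.1 z b t ht))) hrest
  simp only [hsplit]
  rw [hrow_add a.1 _ b t hab, hrow_add a.1 _ b t hab,
    add_right_comm, hrow_add b.1 _ a s hab.symm, hrow_add b.1 _ a s hab.symm,
    hrest_add _ a s (.inl rfl), hrest_add _ a s (.inl rfl), hrest_add _ b t (.inr rfl)]
  linarith

end NoFullRow

section FiniteComparison

lemma integral_bilinear_eq_sum_covariance {ι : Type*} [Fintype ι] [DecidableEq ι]
    (μ : Measure (ι → ℝ)) [IsCenteredGaussian μ] (H : (ι → ℝ) →L[ℝ] (ι → ℝ) →L[ℝ] ℝ) :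
    ∫ x, H x x ∂μ = ∑ a, ∑ b,
      cov[fun x ↦ x a, fun x ↦ x b; μ] * H (Pi.single a 1) (Pi.single b 1) := by
  have hexpand (x : ι → ℝ) : H x x =
      ∑ a, ∑ b, x a * x b * H (Pi.single a 1) (Pi.single b 1) := by
    conv_lhs => rw [pi_eq_sum_univ' x]
    simp only [map_sum, map_smul, sum_apply, smul_apply, smul_eq_mul, Finset.mul_sum, mul_assoc]
    exact Finset.sum_comm.trans
      (Finset.sum_congr rfl fun a _ ↦ Finset.sum_congr rfl fun b _ ↦ mul_left_comm _ _ _)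
  have hcov (a b : ι) : cov[fun x ↦ x a, fun x ↦ x b; μ] = ∫ x, x a * x b ∂μ :=
    covariance_dual_eq_integral_mul (.proj (φ := fun _ ↦ ℝ) a) (.proj (φ := fun _ ↦ ℝ) b)
  have hint (a b : ι) : Integrable (fun x : ι → ℝ ↦ x a * x b) μ :=
    (IsGaussian.memLp_dual μ (.proj (φ := fun _ ↦ ℝ) a) 2 (by simp)).integrable_mul
      (IsGaussian.memLp_dual μ (.proj (φ := fun _ ↦ ℝ) b) 2 (by simp))
  simp_rw [hexpand, hcov]
  rw [integral_finsetSum _ fun a _ ↦ integrable_finsetSum _ fun b _ ↦ (hint a b).mul_const _]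
  refine Finset.sum_congr rfl fun a _ ↦ ?_
  rw [integral_finsetSum _ fun b _ ↦ (hint a b).mul_const _]
  simp_rw [integral_mul_const]

/-- **Kahane's inequality**. -/
theorem integral_le_integral_of_covariance_mul_fderiv_le {ι : Type*} [Fintype ι] [DecidableEq ι]
    {μ ν : Measure (ι → ℝ)} [IsCenteredGaussian μ] [IsCenteredGaussian ν] {f : (ι → ℝ) → ℝ}
    (hf : f.HasTemperateGrowth)
    (h : ∀ z a b,
      cov[fun x ↦ x a, fun x ↦ x b; ν] *
          fderiv ℝ (fderiv ℝ f) z (Pi.single a 1) (Pi.single b 1) ≤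
        cov[fun x ↦ x a, fun x ↦ x b; μ] *
          fderiv ℝ (fderiv ℝ f) z (Pi.single a 1) (Pi.single b 1)) :
    ∫ x, f x ∂ν ≤ ∫ x, f x ∂μ := by
  refine integral_le_integral_of_fderiv_fderiv_le hf fun z ↦ ?_
  rw [integral_bilinear_eq_sum_covariance, integral_bilinear_eq_sum_covariance]
  exact Finset.sum_le_sum fun a _ ↦ Finset.sum_le_sum fun b _ ↦ h z a b

lemma tendsto_smoothTransition_natCast_mul (t : ℝ) :
    Tendsto (fun N : ℕ ↦ Real.smoothTransition (N * t)) atTop (𝓝 (if 0 < t then 1 else 0)) := by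
  split_ifs with ht
  · refine tendsto_const_nhds.congr' ?_
    filter_upwards [(tendsto_natCast_atTop_atTop.atTop_mul_const ht).eventually_ge_atTop 1]
      with N hN
    exact (Real.smoothTransition.one_of_one_le hN).symm
  · refine tendsto_const_nhds.congr fun N ↦ ?_
    exact (Real.smoothTransition.zero_of_nonpos
      (mul_nonpos_of_nonneg_of_nonpos N.cast_nonneg (not_lt.1 ht))).symm

variable {J I : Type*} [Fintype J] [Fintype I]

lemma tendsto_noFullRow (c z : J × I → ℝ) :
    Tendsto (fun N : ℕ ↦ noFullRow (fun a t ↦ Real.smoothTransition (N * (t - c a))) z) atTop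
      (𝓝 ({z | ∃ j, ∀ i, c (j, i) < z (j, i)}ᶜ.indicator 1 z)) := by
  have hval : {z | ∃ j, ∀ i, c (j, i) < z (j, i)}ᶜ.indicator 1 z =
      ∏ j, (1 - ∏ i, if 0 < z (j, i) - c (j, i) then 1 else (0 : ℝ)) := by
    simp only [Finset.prod_ite_zero, Finset.mem_univ, true_imp_iff, Finset.prod_const_one, sub_pos]
    by_cases hz : ∃ j, ∀ i, c (j, i) < z (j, i)
    · obtain ⟨j, hj⟩ := hz
      have hmem : z ∈ {z | ∃ j, ∀ i, c (j, i) < z (j, i)} := ⟨j, hj⟩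
      rw [Set.indicator_of_notMem (Set.notMem_compl_iff.2 hmem),
        Finset.prod_eq_zero (Finset.mem_univ j) (by rw [if_pos hj, sub_self])]
    · rw [Set.indicator_of_mem hz, Pi.one_apply]
      refine (Finset.prod_eq_one fun j _ ↦ ?_).symm
      rw [if_neg (not_exists.1 hz j), sub_zero]
  rw [hval]
  exact tendsto_finsetProd _ fun j _ ↦ (tendsto_finsetProd _ fun i _ ↦
    tendsto_smoothTransition_natCast_mul (z (j, i) - c (j, i))).const_sub 1

lemma hasTemperateGrowth_noFullRow_smoothTransition (c : J × I → ℝ) (N : ℕ) :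
    (noFullRow fun a t ↦ Real.smoothTransition (N * (t - c a))).HasTemperateGrowth :=
  hasTemperateGrowth_noFullRow fun a ↦ hasTemperateGrowth_smoothTransition.comp (by fun_prop)

lemma tendsto_integral_noFullRow (μ : Measure (J × I → ℝ)) [IsProbabilityMeasure μ]
    (c : J × I → ℝ) :
    Tendsto (fun N : ℕ ↦ ∫ z, noFullRow (fun a t ↦ Real.smoothTransition (N * (t - c a))) z ∂μ)
      atTop (𝓝 (1 - μ.real {z | ∃ j, ∀ i, c (j, i) < z (j, i)})) := by
  have hmeas : MeasurableSet {z : J × I → ℝ | ∃ j, ∀ i, c (j, i) < z (j, i)} := by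
    measurability
  rw [← probReal_compl_eq_one_sub hmeas, ← integral_indicator_one hmeas.compl]
  refine tendsto_integral_of_dominated_convergence (fun _ ↦ 1)
    (fun N ↦ (hasTemperateGrowth_noFullRow_smoothTransition c N).1.continuous.aestronglyMeasurable)
    (integrable_const 1) (fun N ↦ .of_forall fun z ↦ ?_)
    (.of_forall fun z ↦ tendsto_noFullRow c z)
  obtain ⟨h₀, h₁⟩ := noFullRow_mem_Icc (σ := fun a t ↦ Real.smoothTransition (N * (t - c a)))
    (fun _ _ ↦ ⟨Real.smoothTransition.nonneg _, Real.smoothTransition.le_one _⟩) z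
  rwa [Real.norm_of_nonneg h₀]

/-- **Gordon's inequality** for finite Gaussian arrays. -/
theorem measure_exists_forall_lt_le_of_covariance_le {μ ν : Measure (J × I → ℝ)}
    [IsCenteredGaussian μ] [IsCenteredGaussian ν]
    (hrow : ∀ a b, a.1 = b.1 → cov[fun x ↦ x a, fun x ↦ x b; ν] = cov[fun x ↦ x a, fun x ↦ x b; μ])
    (hle : ∀ a b, cov[fun x ↦ x a, fun x ↦ x b; ν] ≤ cov[fun x ↦ x a, fun x ↦ x b; μ])
    (c : J × I → ℝ) :
    μ {z | ∃ j, ∀ i, c (j, i) < z (j, i)} ≤ ν {z | ∃ j, ∀ i, c (j, i) < z (j, i)} := by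
  classical
  have hint (N : ℕ) :
      ∫ z, noFullRow (fun a t ↦ Real.smoothTransition (N * (t - c a))) z ∂ν ≤
        ∫ z, noFullRow (fun a t ↦ Real.smoothTransition (N * (t - c a))) z ∂μ := by
    have hf := hasTemperateGrowth_noFullRow_smoothTransition c N
    refine integral_le_integral_of_covariance_mul_fderiv_le hf fun z a b ↦ ?_
    rcases eq_or_ne a.1 b.1 with hab | hab
    · rw [hrow a b hab]
    · refine mul_le_mul_of_nonneg_right (hle a b)
        (fderiv_fderiv_apply_nonneg_of_supermodular (contDiff_infty.1 hf.1 2) ?_ z)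
      refine fun z s t hs ht ↦ noFullRow_supermodular
        (fun _ _ ↦ ⟨Real.smoothTransition.nonneg _, Real.smoothTransition.le_one _⟩)
        (fun a t t' htt' ↦ Real.smoothTransition.monotone ?_) hab.symm z hs ht
      exact mul_le_mul_of_nonneg_left (sub_le_sub_right htt' _) N.cast_nonneg
  have hlim := le_of_tendsto_of_tendsto' (tendsto_integral_noFullRow ν c)
    (tendsto_integral_noFullRow μ c) hint
  exact (ENNReal.toReal_le_toReal (measure_ne_top μ _) (measure_ne_top ν _)).1
    ((sub_le_sub_iff_left 1).1 hlim)

end FiniteComparison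

section GaussianArrays

variable {W W' : Type*}
  [NormedAddCommGroup W] [NormedSpace ℝ W] [MeasurableSpace W] [BorelSpace W]
  [NormedAddCommGroup W'] [NormedSpace ℝ W'] [MeasurableSpace W'] [BorelSpace W']
  {μ : Measure W} {ν : Measure W'} [IsCenteredGaussian μ] [IsCenteredGaussian ν] {R P : Type*}

lemma measure_exists_forall_lt_le_of_covariance_dual_le [Finite R] [Finite P]
    {x : R → P → StrongDual ℝ W} {y : R → P → StrongDual ℝ W'}
    (hrow : ∀ r p p', cov[y r p, y r p'; ν] = cov[x r p, x r p'; μ])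
    (hle : ∀ r p r' p', cov[y r p, y r' p'; ν] ≤ cov[x r p, x r' p'; μ]) (c : R → P → ℝ) :
    μ {w | ∃ r, ∀ p, c r p < x r p w} ≤ ν {w | ∃ r, ∀ p, c r p < y r p w} := by
  have := Fintype.ofFinite R
  have := Fintype.ofFinite P
  have hmeas : MeasurableSet {z : R × P → ℝ | ∃ r, ∀ p, c r p < z (r, p)} := by measurability
  let X : W →L[ℝ] (R × P → ℝ) := .pi fun a ↦ x a.1 a.2
  let Y : W' →L[ℝ] (R × P → ℝ) := .pi fun a ↦ y a.1 a.2
  have hX (a b : R × P) : cov[fun z ↦ z a, fun z ↦ z b; μ.map X] = cov[x a.1 a.2, x b.1 b.2; μ] :=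
    covariance_map_fun (measurable_pi_apply a).aestronglyMeasurable
      (measurable_pi_apply b).aestronglyMeasurable (by fun_prop)
  have hY (a b : R × P) : cov[fun z ↦ z a, fun z ↦ z b; ν.map Y] = cov[y a.1 a.2, y b.1 b.2; ν] :=
    covariance_map_fun (measurable_pi_apply a).aestronglyMeasurable
      (measurable_pi_apply b).aestronglyMeasurable (by fun_prop)
  have hXY := measure_exists_forall_lt_le_of_covariance_le (μ := μ.map X) (ν := ν.map Y)
    (fun a b hab ↦ by rw [hX, hY, ← hab, hrow]) (fun a b ↦ by rw [hX, hY]; exact hle ..)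
    (fun a ↦ c a.1 a.2)
  rwa [Measure.map_apply (by fun_prop) hmeas, Measure.map_apply (by fun_prop) hmeas] at hXY

lemma exists_countable_forall_le_of_continuous {Z : Type*} [TopologicalSpace Z]
    [SecondCountableTopology Z] {f : P → Z → ℝ} (hf : ∀ p, Continuous (f p)) (c : P → ℝ) :
    ∃ D : Set P, D.Countable ∧ ∀ z, (∀ p ∈ D, c p ≤ f p z) → ∀ p, c p ≤ f p z := by
  obtain ⟨D, hD, hDU⟩ := TopologicalSpace.isOpen_iUnion_countable (fun p ↦ {z | f p z < c p})
    fun p ↦ isOpen_lt (hf p) continuous_const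
  refine ⟨D, hD, fun z hz p ↦ not_lt.1 fun hp ↦ ?_⟩
  obtain ⟨q, hqD, hq⟩ := Set.mem_iUnion₂.1 (hDU.ge (Set.mem_iUnion_of_mem p hp))
  exact (hz q hqD).not_gt hq

lemma exists_forall_of_forall_finset [Finite R] {K : R → P → Prop}
    (h : ∀ S : Finset P, ∃ r, ∀ p ∈ S, K r p) : ∃ r, ∀ p, K r p := by
  classical
  have := Fintype.ofFinite R
  by_contra! hK
  choose p hp using hK
  obtain ⟨r, hr⟩ := h (Finset.univ.image p)
  exact hp r (hr (p r) (Finset.mem_image_of_mem p (Finset.mem_univ r)))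

lemma measure_exists_forall_lt_le_measure_exists_forall_le_of_finite_rows
    [SecondCountableTopology W'] [Finite R]
    {x : R → P → StrongDual ℝ W} {y : R → P → StrongDual ℝ W'}
    (hrow : ∀ r p p', cov[y r p, y r p'; ν] = cov[x r p, x r p'; μ])
    (hle : ∀ r p r' p', cov[y r p, y r' p'; ν] ≤ cov[x r p, x r' p'; μ]) (c : R → P → ℝ) :
    μ {w | ∃ r, ∀ p, c r p < x r p w} ≤ ν {w | ∃ r, ∀ p, c r p ≤ y r p w} := by
  choose D hDcount hD using fun r ↦
    exists_countable_forall_le_of_continuous (fun p ↦ (y r p).continuous) (c r)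
  have : Countable (⋃ r, D r : Set P) := (Set.countable_iUnion hDcount).to_subtype
  let F (S : Finset (⋃ r, D r : Set P)) : Set W' := {w | ∃ r, ∀ p ∈ S, c r p ≤ y r p w}
  have hF : ⋂ S, F S ⊆ {w | ∃ r, ∀ p, c r p ≤ y r p w} := fun w hw ↦ by
    obtain ⟨r, hr⟩ := exists_forall_of_forall_finset (Set.mem_iInter.1 hw)
    exact ⟨r, hD r w fun p hp ↦ hr ⟨p, Set.mem_iUnion_of_mem r hp⟩⟩
  have hFmeas (S) : MeasurableSet (F S) := by
    simp only [F, Set.ofPred_exists, Set.ofPred_forall]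
    exact .iUnion fun r ↦ .iInter fun p ↦ .iInter fun _ ↦
      measurableSet_le measurable_const (y r p).measurable
  have hFanti : Antitone F := fun S T hST w ⟨r, hr⟩ ↦ ⟨r, fun p hp ↦ hr p (hST hp)⟩
  refine le_trans ?_ (measure_mono hF)
  rw [hFanti.directed_ge.measure_iInter (fun S ↦ (hFmeas S).nullMeasurableSet)
    ⟨∅, measure_ne_top ν _⟩]
  refine le_iInf fun S ↦ ?_
  calc μ {w | ∃ r, ∀ p, c r p < x r p w}
      ≤ μ {w | ∃ r, ∀ p : S, c r p < x r p w} :=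
        measure_mono fun w ⟨r, hr⟩ ↦ ⟨r, fun p ↦ hr p⟩
    _ ≤ ν {w | ∃ r, ∀ p : S, c r p < y r p w} :=
        measure_exists_forall_lt_le_of_covariance_dual_le
          (x := fun r (p : S) ↦ x r p) (y := fun r (p : S) ↦ y r p)
          (fun r _ _ ↦ hrow r _ _) (fun _ _ _ _ ↦ hle ..) fun r p ↦ c r p
    _ ≤ ν (F S) := measure_mono fun w ⟨r, hr⟩ ↦ ⟨r, fun p hp ↦ (hr ⟨p, hp⟩).le⟩

lemma isOpen_setOf_forall_lt {Z : Type*} [TopologicalSpace Z] [TopologicalSpace P] [CompactSpace P]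
    {f : P → Z → ℝ} (hf : Continuous fun a : P × Z ↦ f a.1 a.2) {c : P → ℝ} (hc : Continuous c) :
    IsOpen {z | ∀ p, c p < f p z} := by
  have hclosed : IsClosed {a : P × Z | f a.1 a.2 ≤ c a.1} := isClosed_le hf (by fun_prop)
  convert (isClosedMap_snd_of_compactSpace _ hclosed).isOpen_compl using 1
  ext z
  simp

/-- The event on the left is a union of open events, one for each row, hence a countable one, and
finitely many rows exhaust its probability. -/
theorem measure_exists_forall_lt_le_measure_exists_forall_le
    [SecondCountableTopology W] [SecondCountableTopology W'] [TopologicalSpace P] [CompactSpace P]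
    {x : R → P → StrongDual ℝ W} {y : R → P → StrongDual ℝ W'} (hx : ∀ r, Continuous (x r))
    (hrow : ∀ r p p', cov[y r p, y r p'; ν] = cov[x r p, x r p'; μ])
    (hle : ∀ r p r' p', cov[y r p, y r' p'; ν] ≤ cov[x r p, x r' p'; μ])
    {c : R → P → ℝ} (hc : ∀ r, Continuous (c r)) :
    μ {w | ∃ r, ∀ p, c r p < x r p w} ≤ ν {w | ∃ r, ∀ p, c r p ≤ y r p w} := by
  have hopen (r : R) : IsOpen {w | ∀ p, c r p < x r p w} :=
    isOpen_setOf_forall_lt (f := fun p w ↦ x r p w)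
      (((hx r).comp continuous_fst).clm_apply continuous_snd) (hc r)
  obtain ⟨D, hDcount, hD⟩ := TopologicalSpace.isOpen_iUnion_countable _ hopen
  have := hDcount.to_subtype
  have hmono : Monotone fun S : Finset D ↦ ⋃ r ∈ S, {w | ∀ p, c r p < x r p w} :=
    fun _ _ h ↦ Set.biUnion_subset_biUnion_left h
  rw [Set.ofPred_exists, ← hD, Set.biUnion_eq_iUnion, Set.iUnion_eq_iUnion_finset,
    hmono.directed_le.measure_iUnion]
  refine iSup_le fun S ↦ ?_
  calc μ (⋃ r ∈ S, {w | ∀ p, c r p < x r p w})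
      ≤ μ {w | ∃ r : S, ∀ p, c r p < x r p w} := measure_mono fun w hw ↦ by
        obtain ⟨r, hr, hw⟩ := Set.mem_iUnion₂.1 hw
        exact ⟨⟨r, hr⟩, hw⟩
    _ ≤ ν {w | ∃ r : S, ∀ p, c r p ≤ y r p w} :=
        measure_exists_forall_lt_le_measure_exists_forall_le_of_finite_rows
          (x := fun (r : S) p ↦ x r p) (y := fun (r : S) p ↦ y r p)
          (fun r ↦ hrow r) (fun _ _ _ _ ↦ hle ..) fun r p ↦ c r p
    _ ≤ ν {w | ∃ r, ∀ p, c r p ≤ y r p w} := measure_mono fun w ⟨r, hr⟩ ↦ ⟨r, hr⟩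

lemma one_le_two_mul_gaussianReal_Ici_zero (v : NNReal) :
    1 ≤ 2 * gaussianReal 0 v (Set.Ici 0) := by
  have hsymm : gaussianReal 0 v (Set.Iic 0) = gaussianReal 0 v (Set.Ici 0) := by
    have hneg : (gaussianReal 0 v).map (-·) = gaussianReal 0 v := by
      rw [gaussianReal_map_neg, neg_zero]
    conv_lhs => rw [← hneg, Measure.map_apply measurable_neg measurableSet_Iic]
    congr 1
    ext
    simp
  calc 1 = gaussianReal 0 v (Set.Iic 0 ∪ Set.Ici 0) := by
        rw [Set.Iic_union_Ici, measure_univ]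
    _ ≤ gaussianReal 0 v (Set.Iic 0) + gaussianReal 0 v (Set.Ici 0) := measure_union_le _ _
    _ = 2 * gaussianReal 0 v (Set.Ici 0) := by rw [hsymm, two_mul]

/-- Gordon's inequality with a defect: the term `a r p * a r' p'` by which the covariances of `y`
exceed those of `x` is supplied by an independent centered Gaussian variable times `a r p`, and
discarding that variable on the half space where it is nonnegative costs the factor `2`. -/
theorem measure_exists_forall_lt_le_two_mul_measure_exists_forall_le
    [SecondCountableTopology W] [SecondCountableTopology W'] [TopologicalSpace P] [CompactSpace P]
    {x : R → P → StrongDual ℝ W} {y : R → P → StrongDual ℝ W'} (hx : ∀ r, Continuous (x r))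
    {a : R → P → ℝ} (ha : ∀ r, Continuous (a r)) (ha₀ : ∀ r p, 0 ≤ a r p)
    (hrow : ∀ r p p', cov[y r p, y r p'; ν] = cov[x r p, x r p'; μ] + a r p * a r p')
    (hle : ∀ r p r' p', cov[y r p, y r' p'; ν] ≤ cov[x r p, x r' p'; μ] + a r p * a r' p')
    {c : R → P → ℝ} (hc : ∀ r, Continuous (c r)) :
    μ {w | ∃ r, ∀ p, c r p < x r p w} ≤ 2 * ν {w | ∃ r, ∀ p, c r p ≤ y r p w} := by
  let γ : Measure ℝ := gaussianReal 0 1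
  let xγ (r : R) (p : P) : StrongDual ℝ (W × ℝ) :=
    (x r p).comp (.fst ℝ W ℝ) + a r p • .snd ℝ W ℝ
  have hcov (r : R) (p : P) (r' : R) (p' : P) :
      cov[xγ r p, xγ r' p'; μ.prod γ] = cov[x r p, x r' p'; μ] + a r p * a r' p' := by
    have hL (L : StrongDual ℝ W) : MemLp L 2 μ := IsGaussian.memLp_dual μ L 2 (by simp)
    have hγ (s : ℝ) : MemLp (fun t ↦ s * t) 2 γ := (memLp_id_gaussianReal 2).const_mul s
    refine (covariance_add_prod (hL _) (hL _) (hγ _) (hγ _)).trans ?_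
    rw [covariance_const_mul_left, covariance_const_mul_right, covariance_self (by fun_prop),
      variance_fun_id_gaussianReal, NNReal.coe_one, mul_one]
  have hxγ (r : R) : Continuous (xγ r) :=
    ((hx r).clm_comp continuous_const).add ((ha r).smul continuous_const)
  calc μ {w | ∃ r, ∀ p, c r p < x r p w}
      ≤ μ {w | ∃ r, ∀ p, c r p < x r p w} * (2 * γ (Set.Ici 0)) :=
        le_mul_of_one_le_right' (one_le_two_mul_gaussianReal_Ici_zero 1)
    _ = 2 * (μ.prod γ) ({w | ∃ r, ∀ p, c r p < x r p w} ×ˢ Set.Ici 0) := by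
        rw [Measure.prod_prod, mul_left_comm]
    _ ≤ 2 * (μ.prod γ) {z | ∃ r, ∀ p, c r p < xγ r p z} := by
        gcongr
        rintro ⟨w, t⟩ ⟨⟨r, hr⟩, ht⟩
        exact ⟨r, fun p ↦ (hr p).trans_le (le_add_of_nonneg_right (mul_nonneg (ha₀ r p) ht))⟩
    _ ≤ 2 * ν {w | ∃ r, ∀ p, c r p ≤ y r p w} := by
        gcongr
        exact measure_exists_forall_lt_le_measure_exists_forall_le hxγ
          (fun r p p' ↦ by rw [hcov, hrow]) (fun r p r' p' ↦ by rw [hcov]; exact hle ..) hc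

lemma isClosed_setOf_exists_forall_le {Z : Type*} [TopologicalSpace Z] [TopologicalSpace R]
    [CompactSpace R] {f : R → P → Z → ℝ} (hf : ∀ p, Continuous fun a : R × Z ↦ f a.1 p a.2)
    {c : R → P → ℝ} (hc : ∀ p, Continuous fun r ↦ c r p) :
    IsClosed {z | ∃ r, ∀ p, c r p ≤ f r p z} := by
  have hclosed : IsClosed {a : R × Z | ∀ p, c a.1 p ≤ f a.1 p a.2} := by
    simp only [Set.ofPred_forall]
    exact isClosed_iInter fun p ↦ isClosed_le ((hc p).comp continuous_fst) (hf p)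
  convert isClosedMap_snd_of_compactSpace _ hclosed using 1
  ext z
  simp

section HasLaw

variable [SecondCountableTopology W] [SecondCountableTopology W']
  [TopologicalSpace R] [CompactSpace R] [TopologicalSpace P] [CompactSpace P]
  {Ω : Type*} [MeasurableSpace Ω] {ρ : Measure Ω} {X : Ω → W} {Y : Ω → W'}
  {x : R → P → StrongDual ℝ W} {y : R → P → StrongDual ℝ W'} {a c : R → P → ℝ}

theorem measure_exists_forall_lt_le_two_mul_of_hasLaw
    (hX : HasLaw X μ ρ) (hY : HasLaw Y ν ρ)
    (hx : ∀ r, Continuous (x r)) (hy : ∀ p, Continuous fun r ↦ y r p)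
    (ha : ∀ r, Continuous (a r)) (ha₀ : ∀ r p, 0 ≤ a r p)
    (hc : ∀ r, Continuous (c r)) (hc' : ∀ p, Continuous fun r ↦ c r p)
    (hrow : ∀ r p p', cov[y r p, y r p'; ν] = cov[x r p, x r p'; μ] + a r p * a r p')
    (hle : ∀ r p r' p', cov[y r p, y r' p'; ν] ≤ cov[x r p, x r' p'; μ] + a r p * a r' p') :
    ρ {ω | ∃ r, ∀ p, c r p < x r p (X ω)} ≤ 2 * ρ {ω | ∃ r, ∀ p, c r p ≤ y r p (Y ω)} := by
  have hclosed : IsClosed {w | ∃ r, ∀ p, c r p ≤ y r p w} :=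
    isClosed_setOf_exists_forall_le (f := fun r p w ↦ y r p w)
      (fun p ↦ ((hy p).comp continuous_fst).clm_apply continuous_snd) hc'
  calc ρ {ω | ∃ r, ∀ p, c r p < x r p (X ω)}
      ≤ μ {w | ∃ r, ∀ p, c r p < x r p w} := by
        rw [← hX.map_eq]
        exact Measure.le_map_apply hX.aemeasurable _
    _ ≤ 2 * ν {w | ∃ r, ∀ p, c r p ≤ y r p w} :=
        measure_exists_forall_lt_le_two_mul_measure_exists_forall_le hx ha ha₀ hrow hle hc
    _ = 2 * ρ {ω | ∃ r, ∀ p, c r p ≤ y r p (Y ω)} := by rw [hY.measure_eq hclosed.measurableSet]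

theorem measure_exists_forall_gt_le_two_mul_of_hasLaw
    (hX : HasLaw X μ ρ) (hY : HasLaw Y ν ρ)
    (hx : ∀ r, Continuous (x r)) (hy : ∀ p, Continuous fun r ↦ y r p)
    (ha : ∀ r, Continuous (a r)) (ha₀ : ∀ r p, 0 ≤ a r p)
    (hc : ∀ r, Continuous (c r)) (hc' : ∀ p, Continuous fun r ↦ c r p)
    (hrow : ∀ r p p', cov[y r p, y r p'; ν] = cov[x r p, x r p'; μ] + a r p * a r p')
    (hle : ∀ r p r' p', cov[y r p, y r' p'; ν] ≤ cov[x r p, x r' p'; μ] + a r p * a r' p') :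
    ρ {ω | ∃ r, ∀ p, x r p (X ω) < c r p} ≤ 2 * ρ {ω | ∃ r, ∀ p, y r p (Y ω) ≤ c r p} := by
  simpa only [Pi.neg_apply, neg_apply, neg_lt_neg_iff, neg_le_neg_iff] using
    measure_exists_forall_lt_le_two_mul_of_hasLaw (x := -x) (y := -y) (c := -c) hX hY
      (fun r ↦ (hx r).neg) (fun p ↦ (hy p).neg) ha ha₀ (fun r ↦ (hc r).neg) (fun p ↦ (hc' p).neg)
      (by simpa only [Pi.neg_apply, FunLike.coe_neg, covariance_neg_neg] using hrow)
      (by simpa only [Pi.neg_apply, FunLike.coe_neg, covariance_neg_neg] using hle)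

end HasLaw

end GaussianArrays

section GordonProcesses

variable {ι κ : Type*} [Fintype ι] [Fintype κ]

/-- The linear form `w ↦ ηᵀw`. -/
def dotDual (η : ι → ℝ) : StrongDual ℝ (ι → ℝ) := ∑ i, η i • .proj i

/-- The primary Gaussian process of Gordon's comparison, as the linear form `M ↦ ηᵀ M u`. -/
def bilinearDual (η : ι → ℝ) (u : κ → ℝ) : StrongDual ℝ (ι → κ → ℝ) :=
  ∑ i, η i • (dotDual u).comp (.proj i)

/-- The auxiliary Gaussian process of Gordon's comparison, as the linear form
`(g, h) ↦ ‖u‖₂ ηᵀg + ‖η‖₂ uᵀh`; the norms are spelled out because `ι → ℝ` carries the sup norm. -/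
def auxiliaryDual (η : ι → ℝ) (u : κ → ℝ) : StrongDual ℝ ((ι → ℝ) × (κ → ℝ)) :=
  .coprod (√(∑ j, u j ^ 2) • dotDual η) (√(∑ i, η i ^ 2) • dotDual u)

lemma dotDual_apply (η w : ι → ℝ) : dotDual η w = ∑ i, η i * w i := by
  simp [dotDual, sum_apply]

lemma bilinearDual_apply (η : ι → ℝ) (u : κ → ℝ) (M : ι → κ → ℝ) :
    bilinearDual η u M = ∑ i, η i * ∑ j, M i j * u j := by
  simp [bilinearDual, sum_apply, dotDual_apply, mul_comm (M _ _)]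

lemma isLinearMap_bilinearDual_left (u : κ → ℝ) (M : ι → κ → ℝ) :
    IsLinearMap ℝ fun η ↦ bilinearDual η u M where
  map_add := by simp only [bilinearDual_apply, Pi.add_apply, add_mul, Finset.sum_add_distrib,
    implies_true]
  map_smul := by simp only [bilinearDual_apply, Pi.smul_apply, smul_eq_mul, mul_assoc,
    Finset.mul_sum, implies_true]

lemma isLinearMap_bilinearDual_right (η : ι → ℝ) (M : ι → κ → ℝ) :
    IsLinearMap ℝ fun u ↦ bilinearDual η u M where
  map_add := by simp only [bilinearDual_apply, Pi.add_apply, mul_add, Finset.sum_add_distrib,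
    implies_true]
  map_smul := by simp only [bilinearDual_apply, Pi.smul_apply, smul_eq_mul, mul_left_comm,
    Finset.mul_sum, implies_true]

lemma auxiliaryDual_apply (η g : ι → ℝ) (u h : κ → ℝ) :
    auxiliaryDual η u (g, h) =
      √(∑ j, u j ^ 2) * (∑ i, η i * g i) + √(∑ i, η i ^ 2) * ∑ j, u j * h j := by
  simp [auxiliaryDual, dotDual_apply]

@[fun_prop]
lemma continuous_dotDual : Continuous (dotDual : (ι → ℝ) → StrongDual ℝ (ι → ℝ)) := by
  unfold dotDual
  fun_prop

lemma continuous_bilinearDual {Z : Type*} [TopologicalSpace Z] {η : Z → ι → ℝ} {u : Z → κ → ℝ}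
    (hη : Continuous η) (hu : Continuous u) : Continuous fun z ↦ bilinearDual (η z) (u z) := by
  unfold bilinearDual
  fun_prop

lemma continuous_auxiliaryDual {Z : Type*} [TopologicalSpace Z] {η : Z → ι → ℝ} {u : Z → κ → ℝ}
    (hη : Continuous η) (hu : Continuous u) : Continuous fun z ↦ auxiliaryDual (η z) (u z) := by
  unfold auxiliaryDual
  fun_prop

lemma covariance_dotDual (η η' : ι → ℝ) :
    cov[dotDual η, dotDual η'; Measure.pi fun _ ↦ gaussianReal 0 1] = ∑ i, η i * η' i := by
  have hL (t : ℝ) : MemLp (fun x ↦ t * x) 2 (gaussianReal 0 1) :=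
    (memLp_id_gaussianReal 2).const_mul t
  rw [funext (dotDual_apply η), funext (dotDual_apply η'),
    covariance_sum_pi (fun i ↦ hL (η i)) fun i ↦ hL (η' i)]
  refine Finset.sum_congr rfl fun i _ ↦ ?_
  rw [covariance_const_mul_left, covariance_const_mul_right, covariance_self (by fun_prop),
    variance_fun_id_gaussianReal, NNReal.coe_one, mul_one]

lemma memLp_smul_dotDual (t : ℝ) (η : ι → ℝ) :
    MemLp (t • dotDual η) 2 (Measure.pi fun _ ↦ gaussianReal 0 1) :=
  IsGaussian.memLp_dual _ (t • dotDual η) 2 (by simp)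

lemma covariance_bilinearDual (η η' : ι → ℝ) (u u' : κ → ℝ) :
    cov[bilinearDual η u, bilinearDual η' u';
        Measure.pi fun _ ↦ Measure.pi fun _ ↦ gaussianReal 0 1] =
      (∑ i, η i * η' i) * ∑ j, u j * u' j := by
  have hsum (η : ι → ℝ) (u : κ → ℝ) (M : ι → κ → ℝ) :
      bilinearDual η u M = ∑ i, (η i • dotDual u) (M i) := by simp [bilinearDual, sum_apply]
  rw [funext (hsum η u), funext (hsum η' u'),
    covariance_sum_pi (fun i ↦ memLp_smul_dotDual (η i) u) fun i ↦ memLp_smul_dotDual (η' i) u',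
    Finset.sum_mul]
  refine Finset.sum_congr rfl fun i _ ↦ ?_
  rw [FunLike.coe_smul, FunLike.coe_smul, covariance_smul_left, covariance_smul_right,
    covariance_dotDual, mul_assoc]

lemma covariance_auxiliaryDual (η η' : ι → ℝ) (u u' : κ → ℝ) :
    cov[auxiliaryDual η u, auxiliaryDual η' u';
        (Measure.pi fun _ ↦ gaussianReal 0 1).prod (Measure.pi fun _ ↦ gaussianReal 0 1)] =
      √(∑ j, u j ^ 2) * √(∑ j, u' j ^ 2) * ∑ i, η i * η' i +
        √(∑ i, η i ^ 2) * √(∑ i, η' i ^ 2) * ∑ j, u j * u' j := by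
  refine (covariance_add_prod (memLp_smul_dotDual _ _) (memLp_smul_dotDual _ _)
    (memLp_smul_dotDual _ _) (memLp_smul_dotDual _ _)).trans ?_
  simp only [FunLike.coe_smul, covariance_smul_left, covariance_smul_right, covariance_dotDual]
  ring

/-- The product subtracted here is nonnegative by Cauchy–Schwarz and vanishes as soon as `η = η'`
or `u = u'`. -/
lemma covariance_auxiliaryDual_eq_sub (η η' : ι → ℝ) (u u' : κ → ℝ) :
    cov[auxiliaryDual η u, auxiliaryDual η' u';
        (Measure.pi fun _ ↦ gaussianReal 0 1).prod (Measure.pi fun _ ↦ gaussianReal 0 1)] =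
      cov[bilinearDual η u, bilinearDual η' u';
          Measure.pi fun _ ↦ Measure.pi fun _ ↦ gaussianReal 0 1] +
        (√(∑ i, η i ^ 2) * √(∑ j, u j ^ 2)) * (√(∑ i, η' i ^ 2) * √(∑ j, u' j ^ 2)) -
        (√(∑ i, η i ^ 2) * √(∑ i, η' i ^ 2) - ∑ i, η i * η' i) *
          (√(∑ j, u j ^ 2) * √(∑ j, u' j ^ 2) - ∑ j, u j * u' j) := by
  rw [covariance_auxiliaryDual, covariance_bilinearDual]
  ring

lemma covariance_auxiliaryDual_le (η η' : ι → ℝ) (u u' : κ → ℝ) :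
    cov[auxiliaryDual η u, auxiliaryDual η' u';
        (Measure.pi fun _ ↦ gaussianReal 0 1).prod (Measure.pi fun _ ↦ gaussianReal 0 1)] ≤
      cov[bilinearDual η u, bilinearDual η' u';
          Measure.pi fun _ ↦ Measure.pi fun _ ↦ gaussianReal 0 1] +
        (√(∑ i, η i ^ 2) * √(∑ j, u j ^ 2)) * (√(∑ i, η' i ^ 2) * √(∑ j, u' j ^ 2)) := by
  rw [covariance_auxiliaryDual_eq_sub]
  exact sub_le_self _ (mul_nonneg (sub_nonneg.2 (Real.sum_mul_le_sqrt_mul_sqrt _ _ _))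
    (sub_nonneg.2 (Real.sum_mul_le_sqrt_mul_sqrt _ _ _)))

lemma sqrt_sum_sq_mul_self (v : ι → ℝ) : √(∑ i, v i ^ 2) * √(∑ i, v i ^ 2) = ∑ i, v i * v i := by
  rw [Real.mul_self_sqrt (Finset.sum_nonneg fun i _ ↦ sq_nonneg (v i))]
  simp only [sq]

lemma covariance_auxiliaryDual_eq_of_eq_or_eq {η η' : ι → ℝ} {u u' : κ → ℝ}
    (h : η = η' ∨ u = u') :
    cov[auxiliaryDual η u, auxiliaryDual η' u';
        (Measure.pi fun _ ↦ gaussianReal 0 1).prod (Measure.pi fun _ ↦ gaussianReal 0 1)] =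
      cov[bilinearDual η u, bilinearDual η' u';
          Measure.pi fun _ ↦ Measure.pi fun _ ↦ gaussianReal 0 1] +
        (√(∑ i, η i ^ 2) * √(∑ j, u j ^ 2)) * (√(∑ i, η' i ^ 2) * √(∑ j, u' j ^ 2)) := by
  rw [covariance_auxiliaryDual_eq_sub]
  rcases h with rfl | rfl <;>
    simp only [sqrt_sum_sq_mul_self, sub_self, zero_mul, mul_zero, sub_zero]

variable {R P : Type*} [TopologicalSpace R] [CompactSpace R] [TopologicalSpace P] [CompactSpace P]
  {Ω : Type*} [MeasurableSpace Ω] {ρ : Measure Ω}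
  {X : Ω → ι → κ → ℝ} {G : Ω → (ι → ℝ) × (κ → ℝ)}
  {η : R × P → ι → ℝ} {u : R × P → κ → ℝ} {c : R × P → ℝ}

theorem measure_exists_forall_lt_bilinearDual_le
    (hX : HasLaw X (Measure.pi fun _ ↦ Measure.pi fun _ ↦ gaussianReal 0 1) ρ)
    (hG : HasLaw G
      ((Measure.pi fun _ ↦ gaussianReal 0 1).prod (Measure.pi fun _ ↦ gaussianReal 0 1)) ρ)
    (hη : Continuous η) (hu : Continuous u) (hc : Continuous c)
    (hrow : ∀ r p p', η (r, p) = η (r, p') ∨ u (r, p) = u (r, p')) :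
    ρ {ω | ∃ r, ∀ p, c (r, p) < bilinearDual (η (r, p)) (u (r, p)) (X ω)} ≤
      2 * ρ {ω | ∃ r, ∀ p, c (r, p) ≤ auxiliaryDual (η (r, p)) (u (r, p)) (G ω)} :=
  measure_exists_forall_lt_le_two_mul_of_hasLaw hX hG
    (fun _ ↦ continuous_bilinearDual (by fun_prop) (by fun_prop))
    (fun _ ↦ continuous_auxiliaryDual (by fun_prop) (by fun_prop))
    (fun _ ↦ by fun_prop) (fun _ _ ↦ by positivity) (fun _ ↦ by fun_prop) (fun _ ↦ by fun_prop)
    (fun r p p' ↦ covariance_auxiliaryDual_eq_of_eq_or_eq (hrow r p p'))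
    fun _ _ _ _ ↦ covariance_auxiliaryDual_le ..

theorem measure_exists_forall_bilinearDual_lt_le
    (hX : HasLaw X (Measure.pi fun _ ↦ Measure.pi fun _ ↦ gaussianReal 0 1) ρ)
    (hG : HasLaw G
      ((Measure.pi fun _ ↦ gaussianReal 0 1).prod (Measure.pi fun _ ↦ gaussianReal 0 1)) ρ)
    (hη : Continuous η) (hu : Continuous u) (hc : Continuous c)
    (hrow : ∀ r p p', η (r, p) = η (r, p') ∨ u (r, p) = u (r, p')) :
    ρ {ω | ∃ r, ∀ p, bilinearDual (η (r, p)) (u (r, p)) (X ω) < c (r, p)} ≤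
      2 * ρ {ω | ∃ r, ∀ p, auxiliaryDual (η (r, p)) (u (r, p)) (G ω) ≤ c (r, p)} :=
  measure_exists_forall_gt_le_two_mul_of_hasLaw hX hG
    (fun _ ↦ continuous_bilinearDual (by fun_prop) (by fun_prop))
    (fun _ ↦ continuous_auxiliaryDual (by fun_prop) (by fun_prop))
    (fun _ ↦ by fun_prop) (fun _ _ ↦ by positivity) (fun _ ↦ by fun_prop) (fun _ ↦ by fun_prop)
    (fun r p p' ↦ covariance_auxiliaryDual_eq_of_eq_or_eq (hrow r p p'))
    fun _ _ _ _ ↦ covariance_auxiliaryDual_le ..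

end GordonProcesses

section MaxMin

variable {E F α : Type*} [ConditionallyCompleteLinearOrder α] {f : E → F → α} {A : Set E}
  {B : Set F} {c : α}

/-- The max–min value `max_{q ∈ B} min_{p ∈ A} f p q`, encoded with `sSup` and `sInf`: it is
meaningful where the extrema exist, as for continuous `f` on nonempty compact sets. -/
def maxMin (f : E → F → α) (A : Set E) (B : Set F) : α :=
  sSup ((fun q ↦ sInf ((fun p ↦ f p q) '' A)) '' B)

lemma exists_forall_lt_of_lt_maxMin (hB : B.Nonempty)
    (hbelow : ∀ q ∈ B, BddBelow ((fun p ↦ f p q) '' A))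
    (h : c < maxMin f A B) :
    ∃ q ∈ B, ∀ p ∈ A, c < f p q := by
  obtain ⟨_, ⟨q, hq, rfl⟩, hcq⟩ := exists_lt_of_lt_csSup (hB.image _) h
  exact ⟨q, hq, fun p hp ↦ hcq.trans_le (csInf_le (hbelow q hq) ⟨p, hp, rfl⟩)⟩

lemma le_maxMin_of_forall_le (hA : A.Nonempty)
    (hbelow : ∀ q ∈ B, BddBelow ((fun p ↦ f p q) '' A)) (habove : ∀ p ∈ A, BddAbove (f p '' B))
    (h : ∃ q ∈ B, ∀ p ∈ A, c ≤ f p q) :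
    c ≤ maxMin f A B := by
  obtain ⟨q, hq, hcq⟩ := h
  obtain ⟨p, hp⟩ := hA
  obtain ⟨M, hM⟩ := habove p hp
  have hbdd : BddAbove ((fun q ↦ sInf ((fun p ↦ f p q) '' A)) '' B) :=
    ⟨M, Set.forall_mem_image.2 fun q hq ↦
      (csInf_le (hbelow q hq) ⟨p, hp, rfl⟩).trans (hM ⟨q, hq, rfl⟩)⟩
  exact (le_csInf (Set.image_nonempty.2 ⟨p, hp⟩) (Set.forall_mem_image.2 hcq)).trans
    (le_csSup hbdd ⟨q, hq, rfl⟩)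

lemma maxMin_le_of_forall_le (hB : B.Nonempty)
    (hbelow : ∀ q ∈ B, BddBelow ((fun p ↦ f p q) '' A)) (h : ∃ p ∈ A, ∀ q ∈ B, f p q ≤ c) :
    maxMin f A B ≤ c := by
  obtain ⟨p, hp, hcp⟩ := h
  exact csSup_le (hB.image _) (Set.forall_mem_image.2 fun q hq ↦
    (csInf_le (hbelow q hq) ⟨p, hp, rfl⟩).trans (hcp q hq))

lemma exists_forall_lt_of_maxMin_lt
    (hbelow : ∀ q ∈ B, BddBelow ((fun p ↦ f p q) '' A)) (habove : ∀ p ∈ A, BddAbove (f p '' B))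
    (hsaddle : ∃ a ∈ A, ∃ b ∈ B, IsSaddlePointOn A B f a b)
    (h : maxMin f A B < c) :
    ∃ p ∈ A, ∀ q ∈ B, f p q < c := by
  obtain ⟨a, ha, b, hb, hab⟩ := hsaddle
  refine ⟨a, ha, fun q hq ↦ lt_of_le_of_lt ?_ h⟩
  exact le_maxMin_of_forall_le ⟨a, ha⟩ hbelow habove ⟨b, hb, fun p hp ↦ hab p hp q hq⟩

end MaxMin

section GordonComparison

variable {ι κ E F Ω : Type*} [Fintype ι] [Fintype κ] [MeasurableSpace Ω] {ρ : Measure Ω}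
  {X : Ω → ι → κ → ℝ} {G : Ω → (ι → ℝ) × (κ → ℝ)} {Q : E → F → ℝ} {A : Set E} {B : Set F}

section Compact

variable [TopologicalSpace E] [TopologicalSpace F] {f : E → F → ℝ}

lemma bddBelow_image_left_of_isCompact (hA : IsCompact A)
    (hf : ContinuousOn (fun t : E × F ↦ f t.1 t.2) (A ×ˢ B)) :
    ∀ q ∈ B, BddBelow ((fun p ↦ f p q) '' A) :=
  fun q hq ↦ hA.bddBelow_image (hf.uncurry_right q hq)

lemma bddAbove_image_right_of_isCompact (hB : IsCompact B)
    (hf : ContinuousOn (fun t : E × F ↦ f t.1 t.2) (A ×ˢ B)) :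
    ∀ p ∈ A, BddAbove (f p '' B) :=
  fun p hp ↦ hB.bddAbove_image (hf.uncurry_left p hp)

lemma exists_isSaddlePointOn_of_convexOn_of_concaveOn
    [AddCommGroup E] [Module ℝ E] [IsTopologicalAddGroup E] [ContinuousSMul ℝ E]
    [AddCommGroup F] [Module ℝ F] [IsTopologicalAddGroup F] [ContinuousSMul ℝ F]
    (hA : IsCompact A) (hB : IsCompact B) (hAne : A.Nonempty) (hBne : B.Nonempty)
    (hAconvex : Convex ℝ A) (hBconvex : Convex ℝ B)
    (hf : ContinuousOn (fun t : E × F ↦ f t.1 t.2) (A ×ˢ B))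
    (hconvex : ∀ q ∈ B, ConvexOn ℝ A fun p ↦ f p q) (hconcave : ∀ p ∈ A, ConcaveOn ℝ B (f p)) :
    ∃ a ∈ A, ∃ b ∈ B, IsSaddlePointOn A B f a b :=
  Sion.exists_isSaddlePointOn hAne hAconvex hA
    (fun q hq ↦ (hf.uncurry_right q hq).lowerSemicontinuousOn)
    (fun q hq ↦ (hconvex q hq).quasiconvexOn) hBconvex hBne hB
    (fun p hp ↦ (hf.uncurry_left p hp).upperSemicontinuousOn)
    (fun p hp ↦ (hconcave p hp).quasiconcaveOn)

variable {u : E → κ → ℝ} {η : F → ι → ℝ}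

lemma continuousOn_bilinearDual_add (hu : Continuous u) (hη : Continuous η)
    (hQ : ContinuousOn (fun t : E × F ↦ Q t.1 t.2) (A ×ˢ B)) (M : ι → κ → ℝ) :
    ContinuousOn (fun t : E × F ↦ bilinearDual (η t.2) (u t.1) M + Q t.1 t.2) (A ×ˢ B) :=
  ((continuous_bilinearDual (η := fun t : E × F ↦ η t.2) (u := fun t ↦ u t.1)
    (by fun_prop) (by fun_prop)).clm_apply continuous_const).continuousOn.add hQ

lemma continuousOn_auxiliaryDual_add (hu : Continuous u) (hη : Continuous η)
    (hQ : ContinuousOn (fun t : E × F ↦ Q t.1 t.2) (A ×ˢ B)) (w : (ι → ℝ) × (κ → ℝ)) :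
    ContinuousOn (fun t : E × F ↦ auxiliaryDual (η t.2) (u t.1) w + Q t.1 t.2) (A ×ˢ B) :=
  ((continuous_auxiliaryDual (η := fun t : E × F ↦ η t.2) (u := fun t ↦ u t.1)
    (by fun_prop) (by fun_prop)).clm_apply continuous_const).continuousOn.add hQ

theorem measure_lt_maxMin_bilinearDual_add_le
    (hX : HasLaw X (Measure.pi fun _ ↦ Measure.pi fun _ ↦ gaussianReal 0 1) ρ)
    (hG : HasLaw G
      ((Measure.pi fun _ ↦ gaussianReal 0 1).prod (Measure.pi fun _ ↦ gaussianReal 0 1)) ρ)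
    (hu : Continuous u) (hη : Continuous η)
    (hQ : ContinuousOn (fun t : E × F ↦ Q t.1 t.2) (A ×ˢ B))
    (hA : IsCompact A) (hB : IsCompact B) (hAne : A.Nonempty) (hBne : B.Nonempty) (c : ℝ) :
    ρ {ω | c < maxMin (fun p q ↦ bilinearDual (η q) (u p) (X ω) + Q p q) A B} ≤
      2 * ρ {ω | c ≤ maxMin (fun p q ↦ auxiliaryDual (η q) (u p) (G ω) + Q p q) A B} := by
  have : CompactSpace A := isCompact_iff_compactSpace.1 hA
  have : CompactSpace B := isCompact_iff_compactSpace.1 hB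
  have hc : Continuous fun t : B × A ↦ c - Q t.2 t.1 :=
    continuous_const.sub (hQ.comp_continuous (f := fun t : B × A ↦ ((t.2 : E), (t.1 : F)))
      (by fun_prop) fun t ↦ ⟨t.2.2, t.1.2⟩)
  refine (measure_mono fun ω hω ↦ ?_).trans ((measure_exists_forall_lt_bilinearDual_le
    (η := fun t : B × A ↦ η t.1) (u := fun t ↦ u t.2) hX hG (by fun_prop) (by fun_prop) hc
    fun _ _ _ ↦ .inl rfl).trans (mul_le_mul_right (measure_mono fun ω hω ↦ ?_) 2))
  · have hf := continuousOn_bilinearDual_add hu hη hQ (X ω)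
    obtain ⟨q, hq, h⟩ := exists_forall_lt_of_lt_maxMin hBne
      (bddBelow_image_left_of_isCompact hA hf) hω
    exact ⟨⟨q, hq⟩, fun p ↦ sub_lt_iff_lt_add.2 (h p p.2)⟩
  · have hf := continuousOn_auxiliaryDual_add hu hη hQ (G ω)
    obtain ⟨q, h⟩ := hω
    exact le_maxMin_of_forall_le hAne (bddBelow_image_left_of_isCompact hA hf)
      (bddAbove_image_right_of_isCompact hB hf)
      ⟨q, q.2, fun p hp ↦ sub_le_iff_le_add.1 (h ⟨p, hp⟩)⟩

end Compact

variable [TopologicalSpace E] [AddCommGroup E] [Module ℝ E]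
  [TopologicalSpace F] [AddCommGroup F] [Module ℝ F]
  {u : E →L[ℝ] κ → ℝ} {η : F →L[ℝ] ι → ℝ}

lemma convexOn_bilinearDual_add {q : F} (hA : Convex ℝ A) (hQ : ConvexOn ℝ A fun p ↦ Q p q)
    (M : ι → κ → ℝ) : ConvexOn ℝ A fun p ↦ bilinearDual (η q) (u p) M + Q p q :=
  (((isLinearMap_bilinearDual_right (η q) M).mk' _ ∘ₗ u.toLinearMap).convexOn hA).add hQ

lemma concaveOn_bilinearDual_add {p : E} (hB : Convex ℝ B) (hQ : ConcaveOn ℝ B (Q p))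
    (M : ι → κ → ℝ) : ConcaveOn ℝ B fun q ↦ bilinearDual (η q) (u p) M + Q p q :=
  (((isLinearMap_bilinearDual_left (u p) M).mk' _ ∘ₗ η.toLinearMap).concaveOn hB).add hQ

variable [IsTopologicalAddGroup E] [ContinuousSMul ℝ E]
  [IsTopologicalAddGroup F] [ContinuousSMul ℝ F]

theorem measure_maxMin_bilinearDual_add_lt_le
    (hX : HasLaw X (Measure.pi fun _ ↦ Measure.pi fun _ ↦ gaussianReal 0 1) ρ)
    (hG : HasLaw G
      ((Measure.pi fun _ ↦ gaussianReal 0 1).prod (Measure.pi fun _ ↦ gaussianReal 0 1)) ρ)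
    (hQ : ContinuousOn (fun t : E × F ↦ Q t.1 t.2) (A ×ˢ B))
    (hA : IsCompact A) (hB : IsCompact B) (hAne : A.Nonempty) (hBne : B.Nonempty)
    (hAconvex : Convex ℝ A) (hBconvex : Convex ℝ B)
    (hQconvex : ∀ q ∈ B, ConvexOn ℝ A fun p ↦ Q p q) (hQconcave : ∀ p ∈ A, ConcaveOn ℝ B (Q p))
    (c : ℝ) :
    ρ {ω | maxMin (fun p q ↦ bilinearDual (η q) (u p) (X ω) + Q p q) A B < c} ≤
      2 * ρ {ω | maxMin (fun p q ↦ auxiliaryDual (η q) (u p) (G ω) + Q p q) A B ≤ c} := by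
  have : CompactSpace A := isCompact_iff_compactSpace.1 hA
  have : CompactSpace B := isCompact_iff_compactSpace.1 hB
  have hc : Continuous fun t : A × B ↦ c - Q t.1 t.2 :=
    continuous_const.sub (hQ.comp_continuous (f := fun t : A × B ↦ ((t.1 : E), (t.2 : F)))
      (by fun_prop) fun t ↦ ⟨t.1.2, t.2.2⟩)
  refine (measure_mono fun ω hω ↦ ?_).trans ((measure_exists_forall_bilinearDual_lt_le
    (η := fun t : A × B ↦ η t.2) (u := fun t ↦ u t.1) hX hG (by fun_prop) (by fun_prop) hc
    fun _ _ _ ↦ .inr rfl).trans (mul_le_mul_right (measure_mono fun ω hω ↦ ?_) 2))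
  · have hf := continuousOn_bilinearDual_add u.continuous η.continuous hQ (X ω)
    have hsaddle := exists_isSaddlePointOn_of_convexOn_of_concaveOn hA hB hAne hBne hAconvex
      hBconvex hf (fun q hq ↦ convexOn_bilinearDual_add hAconvex (hQconvex q hq) (X ω))
      fun p hp ↦ concaveOn_bilinearDual_add hBconvex (hQconcave p hp) (X ω)
    obtain ⟨p, hp, h⟩ := exists_forall_lt_of_maxMin_lt
      (bddBelow_image_left_of_isCompact hA hf)
      (bddAbove_image_right_of_isCompact hB hf) hsaddle hω
    exact ⟨⟨p, hp⟩, fun q ↦ lt_sub_iff_add_lt.2 (h q q.2)⟩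
  · have hf := continuousOn_auxiliaryDual_add u.continuous η.continuous hQ (G ω)
    obtain ⟨p, h⟩ := hω
    exact maxMin_le_of_forall_le hBne (bddBelow_image_left_of_isCompact hA hf)
      ⟨p, p.2, fun q hq ↦ le_sub_iff_add_le.1 (h ⟨q, hq⟩)⟩

theorem gordon_comparison_general {g : Ω → ι → ℝ} {h : Ω → κ → ℝ}
    (hX : HasLaw X (Measure.pi fun _ ↦ Measure.pi fun _ ↦ gaussianReal 0 1) ρ)
    (hg : HasLaw g (Measure.pi fun _ ↦ gaussianReal 0 1) ρ)
    (hh : HasLaw h (Measure.pi fun _ ↦ gaussianReal 0 1) ρ) (hindep : IndepFun g h ρ)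
    (u : E →L[ℝ] κ → ℝ) (η : F →L[ℝ] ι → ℝ)
    (hQ : ContinuousOn (fun t : E × F ↦ Q t.1 t.2) (A ×ˢ B))
    (hA : IsCompact A) (hB : IsCompact B) (hAne : A.Nonempty) (hBne : B.Nonempty) :
    (∀ c, ρ {ω | c < maxMin (fun p q ↦ bilinearDual (η q) (u p) (X ω) + Q p q) A B} ≤
      2 * ρ {ω | c ≤ maxMin (fun p q ↦ auxiliaryDual (η q) (u p) (g ω, h ω) + Q p q) A B}) ∧
    (Convex ℝ A → Convex ℝ B → (∀ q ∈ B, ConvexOn ℝ A fun p ↦ Q p q) →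
      (∀ p ∈ A, ConcaveOn ℝ B (Q p)) →
      ∀ c, ρ {ω | maxMin (fun p q ↦ bilinearDual (η q) (u p) (X ω) + Q p q) A B < c} ≤
        2 * ρ {ω | maxMin (fun p q ↦ auxiliaryDual (η q) (u p) (g ω, h ω) + Q p q) A B ≤ c}) := by
  have : IsProbabilityMeasure ρ := hg.isProbabilityMeasure
  have hG := hindep.hasLaw_prod hg hh
  exact ⟨measure_lt_maxMin_bilinearDual_add_le hX hG u.continuous η.continuous hQ hA hB hAne hBne,
    measure_maxMin_bilinearDual_add_lt_le hX hG hQ hA hB hAne hBne⟩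

end GordonComparison

/-- Gordon comparison inequality, Proposition 3 of the paper.  Let
`X ∈ ℝ^{n×d}` have i.i.d. `N(0,1)` entries, `g ∼ N(0, I_n)`, `h ∼ N(0, I_d)` with `X, g, h`
independent.  Let `Q(β₀, u, r, η, s)` be jointly continuous, convex in `(β₀, u, r)` and concave
in `(η, s)`, and fix compact sets `A` and `B`.  With `Φ` and `φ` the max–min values above,
`P(Φ > c) ≤ 2 P(φ ≥ c)` for all `c`; if moreover `A` and `B` are convex then
`P(Φ < c) ≤ 2 P(φ ≤ c)` for all `c`. -/
theorem gordon_comparison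
    {Ω : Type*} [MeasurableSpace Ω] (μ : Measure Ω) [IsProbabilityMeasure μ]
    (d n : ℕ)
    (X : Ω → Fin n → Fin d → ℝ) (g : Ω → Fin n → ℝ) (h : Ω → Fin d → ℝ)
    (hXmeas : Measurable X) (hgmeas : Measurable g) (hhmeas : Measurable h)
    (hXlaw : μ.map X = Measure.pi fun _ : Fin n => stdGaussian d)
    (hglaw : μ.map g = stdGaussian n) (hhlaw : μ.map h = stdGaussian d)
    (hindep₁ : IndepFun X (fun ω => (g ω, h ω)) μ) (hindep₂ : IndepFun g h μ)
    (Q : ℝ → (Fin d → ℝ) → (Fin n → ℝ) → (Fin n → ℝ) → (Fin d → ℝ) → ℝ)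
    (hQcont : Continuous fun t : ℝ × (Fin d → ℝ) × (Fin n → ℝ) × (Fin n → ℝ) × (Fin d → ℝ) =>
      Q t.1 t.2.1 t.2.2.1 t.2.2.2.1 t.2.2.2.2)
    (hQconvex : ∀ η s, ConvexOn ℝ Set.univ
      (fun p : ℝ × (Fin d → ℝ) × (Fin n → ℝ) => Q p.1 p.2.1 p.2.2 η s))
    (hQconcave : ∀ β₀ u r, ConcaveOn ℝ Set.univ
      (fun q : (Fin n → ℝ) × (Fin d → ℝ) => Q β₀ u r q.1 q.2))
    (A : Set (ℝ × (Fin d → ℝ) × (Fin n → ℝ))) (B : Set ((Fin n → ℝ) × (Fin d → ℝ)))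
    (hA : IsCompact A) (hB : IsCompact B) (hAne : A.Nonempty) (hBne : B.Nonempty) :
    (∀ c : ℝ, μ {ω | c < gordonPhi (X ω) Q A B}
        ≤ 2 * μ {ω | c ≤ gordonphi (g ω) (h ω) Q A B}) ∧
    (Convex ℝ A → Convex ℝ B → ∀ c : ℝ,
      μ {ω | gordonPhi (X ω) Q A B < c}
        ≤ 2 * μ {ω | gordonphi (g ω) (h ω) Q A B ≤ c}) := by
  have hQ : Continuous fun t : (ℝ × (Fin d → ℝ) × (Fin n → ℝ)) × (Fin n → ℝ) × (Fin d → ℝ) ↦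
      Q t.1.1 t.1.2.1 t.1.2.2 t.2.1 t.2.2 :=
    hQcont.comp (f := fun t : (ℝ × _ × _) × _ ↦ (t.1.1, t.1.2.1, t.1.2.2, t.2)) (by fun_prop)
  have hgordon := gordon_comparison_general (Q := fun p q ↦ Q p.1 p.2.1 p.2.2 q.1 q.2)
    ⟨hXmeas.aemeasurable, hXlaw⟩ ⟨hgmeas.aemeasurable, hglaw⟩ ⟨hhmeas.aemeasurable, hhlaw⟩ hindep₂
    (.fst ℝ _ _ ∘L .snd ℝ _ _) (.fst ℝ _ _) hQ.continuousOn hA hB hAne hBne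
  simp only [maxMin, bilinearDual_apply, auxiliaryDual_apply] at hgordon
  exact ⟨hgordon.1, fun hAconvex hBconvex ↦ hgordon.2 hAconvex hBconvex
    (fun q _ ↦ (hQconvex q.1 q.2).subset (Set.subset_univ A) hAconvex)
    fun p _ ↦ (hQconcave p.1 p.2.1 p.2.2).subset (Set.subset_univ B) hBconvex⟩

end
end

section
/- Fix any C_η > c_η > 0 and C₂ > 0. Under the stated distributional assumptions, the function (β₀, M_u, ρ₁) ↦ max over M_η ∈ [c_η, C_η] and ρ₂ ∈ (0, C₂] of A(β₀, M_u, ρ₁, M_η, ρ₂) is jointly strictly convex on ℝ × ℝ_{≥0} × ℝ_{>0}. Moreover, at ρ₁ = 0 this function is jointly strictly convex in (β₀, M_u) on ℝ × ℝ_{≥0}. -/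
open MeasureTheory ProbabilityTheory Filter Finset

noncomputable section

/-- The pinball (quantile) loss `ℓ_τ(r) = τ·r − min{r, 0}`. -/
def pinball (τ r : ℝ) : ℝ := τ * r - min r 0

/-- The Moreau envelope of a scalar function, `e_f(x; ρ) = inf_v (x − v)²/(2ρ) + f(v)` for
`ρ > 0`, continuously extended by `e_f(x; 0) = f(x)`. -/
def moreau (f : ℝ → ℝ) (x ρ : ℝ) : ℝ :=
  if ρ = 0 then f x else ⨅ v : ℝ, ((x - v) ^ 2 / (2 * ρ) + f v)

/-- The convex (Fenchel) conjugate of a scalar function, with values in `EReal`. -/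
def conjE (f : ℝ → ℝ) (x : ℝ) : EReal := ⨆ v : ℝ, ((v * x - f v : ℝ) : EReal)

/-- The Moreau envelope of the convex conjugate `f*` of a scalar function `f`. -/
def moreauConj (f : ℝ → ℝ) (x ρ : ℝ) : ℝ :=
  (⨅ v : ℝ, ((((x - v) ^ 2 / (2 * ρ) : ℝ) : EReal) + conjE f v)).toReal

/-- Assumptions on the noise distribution `P_ε`: mean zero, finite second moment and a bounded,
continuous density that is positive on all of `ℝ` (hence, in particular, continuous). -/
structure NoiseAssumption (Pε : Measure ℝ) : Prop where
  mean_zero : ∫ x, x ∂Pε = 0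
  second_moment : Integrable (fun x => x ^ 2) Pε
  density : ∃ f : ℝ → ℝ, Continuous f ∧ (∀ x, 0 < f x) ∧ (∃ C, ∀ x, f x ≤ C) ∧
    Pε = volume.withDensity fun x => ENNReal.ofReal (f x)

/-- The deterministic asymptotic objective
`A(β₀, M_u, ρ₁, M_η, ρ₂) = E[e_{ℓ_τ}(M_u g₁ + ε₁ − β₀; ρ₁/M_η)] − M_η² M_u γ/(2ρ₂)
  + γ E[e_ν((M_η M_u/ρ₂) h₁ + γ √d β̃₁; M_u/ρ₂)] + M_η ρ₁/2 − M_u ρ₂/2`,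
where `(g₁, ε₁) ∼ N(0,1) ⊗ P_ε` and `(h₁, √d β̃₁) ∼ N(0,1) ⊗ P_β`. -/
def asymObj (τ γ : ℝ) (Pε Pβ : Measure ℝ) (ν : ℝ → ℝ) (β₀ Mu ρ₁ Mη ρ₂ : ℝ) : ℝ :=
  (∫ z, moreau (pinball τ) (Mu * z.1 + z.2 - β₀) (ρ₁ / Mη) ∂((gaussianReal 0 1).prod Pε))
    - Mη ^ 2 * Mu * γ / (2 * ρ₂)
    + γ * (∫ z, moreau ν (Mη * Mu / ρ₂ * z.1 + γ * z.2) (Mu / ρ₂)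
        ∂((gaussianReal 0 1).prod Pβ))
    + Mη * ρ₁ / 2 - Mu * ρ₂ / 2

/-- The inner maximum of the asymptotic objective over `M_η ∈ [c_η, C_η]` and `ρ₂ ∈ (0, C₂]`,
as a function of `(β₀, M_u, ρ₁)`. -/
def asymFmax (τ γ : ℝ) (Pε Pβ : Measure ℝ) (ν : ℝ → ℝ) (cη Cη C₂ : ℝ)
    (p : ℝ × ℝ × ℝ) : ℝ :=
  sSup ((fun q : ℝ × ℝ => asymObj τ γ Pε Pβ ν p.1 p.2.1 p.2.2 q.1 q.2) ''
    (Set.Icc cη Cη ×ˢ Set.Ioc (0 : ℝ) C₂))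

/-- The constraint box `{|β₀| ≤ C_{β₀}} × {0 ≤ M_u ≤ C_u} × {0 ≤ ρ₁ ≤ C₁}` of the outer
minimization of the asymptotic program. -/
def asymBox (Cβ0 Cu C₁ : ℝ) : Set (ℝ × ℝ × ℝ) :=
  Set.Icc (-Cβ0) Cβ0 ×ˢ Set.Icc (0 : ℝ) Cu ×ˢ Set.Icc (0 : ℝ) C₁

/-- Parts (v) and (vi) of the regularizer assumption, stated for the limiting scalar penalty `ν`:
there exist a.e. first and second derivatives `D1, D2` of `x ↦ e_{ν*}(x; ρ)` satisfying the
differentiation-under-the-integral / Stein identities, and the expected second derivative is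
bounded away from zero on compacts. -/
def ConjDerivAssumption (γ : ℝ) (Pβ : Measure ℝ) (ν : ℝ → ℝ) : Prop :=
  ∃ D1 D2 : ℝ → ℝ → ℝ,
    (∀ ρ > (0 : ℝ),
      (∀ᵐ x ∂(volume : Measure ℝ), HasDerivAt (fun t => moreauConj ν t ρ) (D1 x ρ) x) ∧
      (∀ᵐ x ∂(volume : Measure ℝ), HasDerivAt (fun t => D1 t ρ) (D2 x ρ) x) ∧
      (∀ c : ℝ,
        HasDerivAt (fun c' => ∫ z, moreauConj ν (c' * z.1 + ρ * γ * z.2) ρ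
            ∂((gaussianReal 0 1).prod Pβ))
          (∫ z, z.1 * D1 (c * z.1 + ρ * γ * z.2) ρ ∂((gaussianReal 0 1).prod Pβ)) c ∧
        (∫ z, z.1 * D1 (c * z.1 + ρ * γ * z.2) ρ ∂((gaussianReal 0 1).prod Pβ))
          = c * ∫ z, D2 (c * z.1 + ρ * γ * z.2) ρ ∂((gaussianReal 0 1).prod Pβ))) ∧
    (∀ A : Set ℝ, IsCompact A → A ⊆ Set.Ioi 0 → ∀ Cρ > (0 : ℝ), ∃ m > (0 : ℝ),
      ∀ c ∈ A, ∀ ρ ∈ Set.Ioc (0 : ℝ) Cρ,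
        m ≤ ∫ z, D2 (c * z.1 + ρ * γ * z.2) ρ ∂((gaussianReal 0 1).prod Pβ))

/-!
The Moreau envelope of a convex function `f` is jointly convex in `(x, ρ)`, including at `ρ = 0`.
Taking expectations makes it strictly convex: if `s` is interior to the subdifferential of `f` at
`v`, then `s * x + c - ρ * s ^ 2 / 2`, with `s * w + c` the affine minorant touching `f` at `v`, is
a lower bound for the envelope that is sharp exactly on the ray `x = v + ρ * s`. For any two points
`(β₀, M_u, ρ₁)` some residual lands on such a ray at the convex combination but not at the
endpoints, and by continuity and full support of the noise this strict inequality has positive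
weight in the integral. For the pinball loss, `v = 0` and `s` ranges over `(τ - 1, τ)`.

The other terms of the objective are convex for fixed `(M_η, ρ₂)`, and the loss does not involve
`ρ₂`. Its convexity gap is thus positive and continuous in `M_η` alone, hence bounded below on
`[c_η, C_η]`, and so survives the maximization even though `(0, C₂]` is not compact.
-/

section ConvexAnalysis

variable {E F : Type*} [AddCommGroup E] [Module ℝ E] [AddCommGroup F] [Module ℝ F]

lemma strictConvexOn_comp_linearMap {S : Set F} {f : F → ℝ} (hf : StrictConvexOn ℝ S f)
    (g : E →ₗ[ℝ] F) (hg : Function.Injective g) : StrictConvexOn ℝ (g ⁻¹' S) (f ∘ g) := by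
  refine ⟨hf.1.linear_preimage g, fun x hx y hy hxy a b ha hb hab => ?_⟩
  simpa only [Function.comp_apply, map_add, map_smul] using hf.2 hx hy (hg.ne hxy) ha hb hab

lemma strictConvexOn_integral {α : Type*} [TopologicalSpace α] [MeasurableSpace α]
    {μ : Measure α} [μ.IsOpenPosMeasure] {S : Set E} {f : α → E → ℝ} (hS : Convex ℝ S)
    (hconv : ∀ z, ConvexOn ℝ S (f z)) (hcont : ∀ p ∈ S, Continuous fun z => f z p)
    (hint : ∀ p ∈ S, Integrable (fun z => f z p) μ)
    (hstrict : ∀ p ∈ S, ∀ q ∈ S, p ≠ q → ∀ a b : ℝ, 0 < a → 0 < b → a + b = 1 →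
      ∃ z, f z (a • p + b • q) < a * f z p + b * f z q) :
    StrictConvexOn ℝ S fun p => ∫ z, f z p ∂μ := by
  refine ⟨hS, fun p hp q hq hpq a b ha hb hab => ?_⟩
  have hm : a • p + b • q ∈ S := hS hp hq ha.le hb.le hab
  have hint_comb : Integrable (fun z => a * f z p + b * f z q) μ :=
    ((hint p hp).const_mul a).add ((hint q hq).const_mul b)
  have hcont_gap : Continuous fun z => a * f z p + b * f z q - f z (a • p + b • q) :=
    (((hcont p hp).const_mul a).add ((hcont q hq).const_mul b)).sub (hcont _ hm)
  obtain ⟨z, hz⟩ := hstrict p hp q hq hpq a b ha hb hab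
  have hgap_pos : 0 < ∫ z, (a * f z p + b * f z q - f z (a • p + b • q)) ∂μ :=
    integral_pos_of_integrable_nonneg_nonzero hcont_gap (hint_comb.sub (hint _ hm))
      (fun z => sub_nonneg.2 ((hconv z).2 hp hq ha.le hb.le hab)) (sub_pos.2 hz).ne'
  rw [integral_sub hint_comb (hint _ hm), integral_add ((hint p hp).const_mul a)
    ((hint q hq).const_mul b), integral_const_mul, integral_const_mul] at hgap_pos
  exact sub_pos.1 hgap_pos

/- A supremum of strictly convex functions need not be strictly convex: compactness of `K` makes
the convexity gap of `L · η` uniform in `η`, so it survives the supremum. -/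
lemma strictConvexOn_sSup_image_add {X Y : Type*} [TopologicalSpace X] {S : Set E} {K : Set X}
    {T : Set Y} {L : E → X → ℝ} {M : E → X × Y → ℝ} (hK : IsCompact K) (hKne : K.Nonempty)
    (hTne : T.Nonempty) (hL : ∀ η ∈ K, StrictConvexOn ℝ S fun p => L p η)
    (hLcont : ∀ p ∈ S, ContinuousOn (L p) K)
    (hM : ∀ q ∈ K ×ˢ T, ConvexOn ℝ S fun p => M p q)
    (hMbdd : ∀ p ∈ S, BddAbove (M p '' K ×ˢ T)) :
    StrictConvexOn ℝ S fun p => sSup ((fun q => L p q.1 + M p q) '' K ×ˢ T) := by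
  have hS : Convex ℝ S := hKne.elim fun η hη => (hL η hη).1
  refine ⟨hS, fun p hp p' hp' hne a b ha hb hab => ?_⟩
  have hm : a • p + b • p' ∈ S := hS hp hp' ha.le hb.le hab
  obtain ⟨δ, hδ, hgap⟩ :
      ∃ δ > 0, ∀ η ∈ K, δ ≤ a * L p η + b * L p' η - L (a • p + b • p') η :=
    hK.exists_forall_le'
      (((hLcont p hp).const_mul a |>.add ((hLcont p' hp').const_mul b)).sub (hLcont _ hm))
      fun η hη => sub_pos.2 ((hL η hη).2 hp hp' hne ha hb hab)
  have hbdd : ∀ p ∈ S, BddAbove ((fun q => L p q.1 + M p q) '' K ×ˢ T) := by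
    intro p hp
    obtain ⟨B, hB⟩ := hK.bddAbove_image (hLcont p hp)
    obtain ⟨C, hC⟩ := hMbdd p hp
    refine ⟨B + C, ?_⟩
    rintro _ ⟨q, hq, rfl⟩
    exact add_le_add (hB ⟨q.1, hq.1, rfl⟩) (hC ⟨q, hq, rfl⟩)
  refine lt_of_le_of_lt (csSup_le ((hKne.prod hTne).image _) ?_) (sub_lt_self _ hδ)
  rintro _ ⟨q, hq, rfl⟩
  have hsup := mul_le_mul_of_nonneg_left (le_csSup (hbdd p hp) ⟨q, hq, rfl⟩) ha.le
  have hsup' := mul_le_mul_of_nonneg_left (le_csSup (hbdd p' hp') ⟨q, hq, rfl⟩) hb.le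
  have hMq := (hM q hq).2 hp hp' ha.le hb.le hab
  have hLq := hgap q.1 hq.1
  simp only [smul_eq_mul, mul_add] at hsup hsup' hMq hLq ⊢
  linarith

lemma exists_affine_le_of_convexOn {f : ℝ → ℝ} (hf : ConvexOn ℝ Set.univ f) :
    ∃ k c : ℝ, ∀ v, k * v + c ≤ f v := by
  obtain ⟨k, c, h⟩ := hf.exists_affine_le_real isClosed_univ
    (lowerSemicontinuousOn_univ_iff.2 hf.locallyLipschitz.continuous.lowerSemicontinuous)
  exact ⟨k, c, fun v => h v (Set.mem_univ v)⟩

/- As `η` varies, `r / η` either stays in the interior of the domain, where `φ` is continuous, or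
vanishes identically. -/
lemma continuousOn_div_of_convexOn {φ : ℝ → ℝ} (hφ : ConvexOn ℝ (Set.Ici 0) φ) {r : ℝ}
    (hr : 0 ≤ r) : ContinuousOn (fun η => φ (r / η)) (Set.Ioi 0) := by
  rcases hr.eq_or_lt with rfl | hr
  · simpa only [zero_div] using continuousOn_const
  · have hφpos : ContinuousOn φ (Set.Ioi 0) := by
      simpa only [interior_Ici] using hφ.continuousOn_interior
    exact hφpos.comp (continuousOn_const.div continuousOn_id fun η hη => ne_of_gt hη)
      fun η hη => div_pos hr hη

lemma strictConvexOn_comp_div_snd_snd {φ : E × F × ℝ → ℝ}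
    (hφ : StrictConvexOn ℝ (Set.univ ×ˢ Set.univ ×ˢ Set.Ici 0) φ) {η : ℝ} (hη : 0 < η) :
    StrictConvexOn ℝ (Set.univ ×ˢ Set.univ ×ˢ Set.Ici 0)
      fun p : E × F × ℝ => φ (p.1, p.2.1, p.2.2 / η) := by
  have hinj : Function.Injective (LinearMap.mulRight ℝ η⁻¹) :=
    mul_left_injective₀ (inv_ne_zero hη.ne')
  refine (strictConvexOn_comp_linearMap hφ
    (LinearMap.id.prodMap (LinearMap.id.prodMap (LinearMap.mulRight ℝ η⁻¹)))
    (Function.injective_id.prodMap (Function.injective_id.prodMap hinj))).subset ?_ hφ.1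
  exact fun p hp => ⟨trivial, trivial, mul_nonneg hp.2.2 (inv_nonneg.2 hη.le)⟩

lemma continuousOn_div_snd_snd {φ : E × F × ℝ → ℝ}
    (hφ : ConvexOn ℝ (Set.univ ×ˢ Set.univ ×ˢ Set.Ici 0) φ) {p : E × F × ℝ} (hp : 0 ≤ p.2.2) :
    ContinuousOn (fun η => φ (p.1, p.2.1, p.2.2 / η)) (Set.Ioi 0) :=
  continuousOn_div_of_convexOn ((hφ.comp_affineMap ((AffineMap.const ℝ ℝ p.1).prod
    ((AffineMap.const ℝ ℝ p.2.1).prod (AffineMap.id ℝ ℝ)))).subset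
      (fun _ hr => ⟨trivial, trivial, hr⟩) (convex_Ici 0)) hp

end ConvexAnalysis

section MoreauEnvelope

variable {f : ℝ → ℝ} {k c x x' ρ ρ' v w s a b : ℝ}

lemma affine_le_sq_div_add (hf : ∀ w, k * w + c ≤ f w) (hρ : 0 < ρ) (v : ℝ) :
    k * x + c - ρ * k ^ 2 / 2 ≤ (x - v) ^ 2 / (2 * ρ) + f v := by
  have hsq : (x - v) ^ 2 / (2 * ρ) - (k * (x - v) - ρ * k ^ 2 / 2)
      = (x - v - ρ * k) ^ 2 / (2 * ρ) := by field
  have hsq_nonneg : 0 ≤ (x - v - ρ * k) ^ 2 / (2 * ρ) := by positivity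
  linarith [hf v]

lemma le_moreau_of_affine_le (hf : ∀ w, k * w + c ≤ f w) (hρ : 0 ≤ ρ) :
    k * x + c - ρ * k ^ 2 / 2 ≤ moreau f x ρ := by
  unfold moreau
  split_ifs with h
  · simpa [h] using hf x
  · exact le_ciInf (affine_le_sq_div_add hf (lt_of_le_of_ne' hρ h))

/- `(x - v) ^ 2 ≤ 2 * ρ * w` is `(x - v) ^ 2 / (2 * ρ) ≤ w` with the junk value at `ρ = 0` replaced
by the constraint `v = x`. -/
lemma moreau_le_of_sq_le (hf : ∀ w, k * w + c ≤ f w) (hρ : 0 ≤ ρ) (hw : 0 ≤ w)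
    (h : (x - v) ^ 2 ≤ 2 * ρ * w) : moreau f x ρ ≤ w + f v := by
  rcases hρ.eq_or_lt with rfl | hρ
  · obtain rfl : x = v := by nlinarith
    simpa [moreau] using hw
  · have hbdd : BddBelow (Set.range fun v => (x - v) ^ 2 / (2 * ρ) + f v) :=
      ⟨_, Set.forall_mem_range.2 (affine_le_sq_div_add hf hρ)⟩
    rw [moreau, if_neg hρ.ne']
    refine (ciInf_le hbdd v).trans (add_le_add_left ?_ _)
    rw [div_le_iff₀ (by positivity)]
    linarith

lemma exists_sq_le_of_moreau_lt {t : ℝ} (hρ : 0 ≤ ρ) (h : moreau f x ρ < t) :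
    ∃ v w, 0 ≤ w ∧ (x - v) ^ 2 ≤ 2 * ρ * w ∧ w + f v < t := by
  rcases hρ.eq_or_lt with rfl | hρ
  · exact ⟨x, 0, le_rfl, by simp, by simpa [moreau] using h⟩
  · rw [moreau, if_neg hρ.ne'] at h
    obtain ⟨v, hv⟩ := exists_lt_of_ciInf_lt h
    exact ⟨v, (x - v) ^ 2 / (2 * ρ), by positivity, le_of_eq (by field), hv⟩

lemma add_sq_le_two_mul_of_sq_le {y y' w' : ℝ} (hρ : 0 ≤ ρ) (hρ' : 0 ≤ ρ') (hw : 0 ≤ w)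
    (hw' : 0 ≤ w') (h : y ^ 2 ≤ 2 * ρ * w) (h' : y' ^ 2 ≤ 2 * ρ' * w') :
    (y + y') ^ 2 ≤ 2 * (ρ + ρ') * (w + w') := by
  have hmul : (y * y') ^ 2 ≤ (ρ * w' + ρ' * w) ^ 2 := by
    calc (y * y') ^ 2 = y ^ 2 * y' ^ 2 := mul_pow y y' 2
      _ ≤ 2 * ρ * w * (2 * ρ' * w') := mul_le_mul h h' (sq_nonneg _) (by positivity)
      _ ≤ (ρ * w' + ρ' * w) ^ 2 := by linarith [sq_nonneg (ρ * w' - ρ' * w)]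
  linarith [(abs_le_of_sq_le_sq' hmul (by positivity)).2]

lemma convexOn_moreau (hf : ConvexOn ℝ Set.univ f) :
    ConvexOn ℝ (Set.univ ×ˢ Set.Ici 0) fun p : ℝ × ℝ => moreau f p.1 p.2 := by
  refine ⟨convex_univ.prod (convex_Ici 0), ?_⟩
  rintro ⟨x, ρ⟩ ⟨-, hρ : 0 ≤ ρ⟩ ⟨x', ρ'⟩ ⟨-, hρ' : 0 ≤ ρ'⟩ a b ha hb hab
  obtain ⟨k, c, hkc⟩ := exists_affine_le_of_convexOn hf
  refine le_of_forall_pos_le_add fun δ hδ => ?_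
  obtain ⟨v, w, hw, hsq, hvw⟩ :=
    exists_sq_le_of_moreau_lt hρ (lt_add_of_pos_right (moreau f x ρ) hδ)
  obtain ⟨v', w', hw', hsq', hvw'⟩ :=
    exists_sq_le_of_moreau_lt hρ' (lt_add_of_pos_right (moreau f x' ρ') hδ)
  have hsq_comb : (a * x + b * x' - (a * v + b * v')) ^ 2
      ≤ 2 * (a * ρ + b * ρ') * (a * w + b * w') := by
    have h := add_sq_le_two_mul_of_sq_le (y := a * (x - v)) (y' := b * (x' - v'))
      (mul_nonneg ha hρ) (mul_nonneg hb hρ') (mul_nonneg ha hw) (mul_nonneg hb hw')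
      (by linarith [mul_le_mul_of_nonneg_left hsq (sq_nonneg a)])
      (by linarith [mul_le_mul_of_nonneg_left hsq' (sq_nonneg b)])
    linarith
  have hconv : f (a * v + b * v') ≤ a * f v + b * f v' :=
    hf.2 (Set.mem_univ v) (Set.mem_univ v') ha hb hab
  calc moreau f (a * x + b * x') (a * ρ + b * ρ')
      ≤ (a * w + b * w') + f (a * v + b * v') :=
        moreau_le_of_sq_le hkc (by positivity) (by positivity) hsq_comb
    _ ≤ a * (w + f v) + b * (w' + f v') := by linarith
    _ ≤ a * (moreau f x ρ + δ) + b * (moreau f x' ρ' + δ) := by gcongr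
    _ = a * moreau f x ρ + b * moreau f x' ρ' + δ := by linear_combination δ * hab

lemma continuous_moreau (hf : ConvexOn ℝ Set.univ f) (hρ : 0 ≤ ρ) :
    Continuous fun x => moreau f x ρ := by
  have hslice : ConvexOn ℝ Set.univ fun x => moreau f x ρ :=
    ((convexOn_moreau hf).comp_affineMap ((AffineMap.id ℝ ℝ).prod (AffineMap.const ℝ ℝ ρ))).subset
      (fun _ _ => ⟨trivial, hρ⟩) convex_univ
  exact hslice.locallyLipschitz.continuous

/-- The subdifferential of `f` at `v`: the slopes of the affine minorants of `f` that are exact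
at `v`. -/
def subdiff (f : ℝ → ℝ) (v : ℝ) : Set ℝ := {s | ∀ w, s * w + (f v - s * v) ≤ f w}

lemma lt_moreau_of_mem_interior_subdiff (hs : s ∈ interior (subdiff f v)) (hρ : 0 ≤ ρ)
    (hx : x ≠ v + ρ * s) : s * x + (f v - s * v) - ρ * s ^ 2 / 2 < moreau f x ρ := by
  by_contra! h
  have hmax : IsLocalMax (fun s => s * x + (f v - s * v) - ρ * s ^ 2 / 2) s := by
    filter_upwards [mem_interior_iff_mem_nhds.1 hs] with t ht
    exact (le_moreau_of_affine_le ht hρ).trans h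
  have hderiv : HasDerivAt (fun s => s * x + (f v - s * v) - ρ * s ^ 2 / 2) (x - v - ρ * s) s := by
    refine (((hasDerivAt_mul_const x).add (((hasDerivAt_mul_const v)).const_sub (f v))).sub
      (((hasDerivAt_pow 2 s).const_mul ρ).div_const 2)).congr_deriv ?_
    ring
  exact hx (by linarith [hmax.hasDerivAt_eq_zero hderiv])

/- At the convex combination the slope `s` attains the supremum of the lower bounds
`le_moreau_of_affine_le`, so equality would make it optimal at `(x, ρ)` too, where it is not a
critical point. -/
lemma moreau_combination_lt (hs : s ∈ interior (subdiff f v)) (hρ : 0 ≤ ρ) (hρ' : 0 ≤ ρ')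
    (ha : 0 < a) (hb : 0 < b) (hab : a + b = 1)
    (hcomb : a * x + b * x' = v + (a * ρ + b * ρ') * s) (hx : x ≠ v + ρ * s) :
    moreau f (a * x + b * x') (a * ρ + b * ρ') < a * moreau f x ρ + b * moreau f x' ρ' := by
  have hs' : s ∈ subdiff f v := interior_subset hs
  calc moreau f (a * x + b * x') (a * ρ + b * ρ')
      ≤ (a * ρ + b * ρ') * s ^ 2 / 2 + f v :=
        moreau_le_of_sq_le hs' (by positivity) (by positivity)
          (le_of_eq (by rw [hcomb]; ring))
    _ = a * (s * x + (f v - s * v) - ρ * s ^ 2 / 2)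
        + b * (s * x' + (f v - s * v) - ρ' * s ^ 2 / 2) := by
        linear_combination (s * v - f v) * hab - s * hcomb
    _ < a * moreau f x ρ + b * moreau f x' ρ' :=
        add_lt_add_of_lt_of_le
          (mul_lt_mul_of_pos_left (lt_moreau_of_mem_interior_subdiff hs hρ hx) ha)
          (mul_le_mul_of_nonneg_left (le_moreau_of_affine_le hs' hρ') hb.le)

lemma moreau_le_self (hf : ∀ w, k * w + c ≤ f w) (hρ : 0 ≤ ρ) : moreau f x ρ ≤ f x := by
  simpa using moreau_le_of_sq_le (v := x) hf hρ le_rfl (by simp)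

end MoreauEnvelope

section ExpectedMoreau

variable {f : ℝ → ℝ} {μ : Measure (ℝ × ℝ)} {v : ℝ}

/-- The expected Moreau envelope `E[e_f(u g + ε - β; ρ)]` of the residual, as a function of
`(β, u, ρ)`, where `(g, ε) ∼ μ`. -/
def expectedMoreau (f : ℝ → ℝ) (μ : Measure (ℝ × ℝ)) (p : ℝ × ℝ × ℝ) : ℝ :=
  ∫ z, moreau f (p.2.1 * z.1 + z.2 - p.1) p.2.2 ∂μ

lemma exists_mem_mul_sub_ne_mul {β β' u u' ρ ρ' : ℝ} {U : Set ℝ} (hU : U.Nontrivial)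
    (hne : (β, u, ρ) ≠ (β', u', ρ')) :
    ∃ g, ∃ s ∈ U, (u - u') * g - (β - β') ≠ (ρ - ρ') * s := by
  by_contra! h
  obtain ⟨s, hs, t, ht, hst⟩ := hU
  have hρ : ρ - ρ' = 0 := by
    have : (ρ - ρ') * (s - t) = 0 := by linarith [h 0 s hs, h 0 t ht]
    exact (mul_eq_zero.1 this).resolve_right (sub_ne_zero.2 hst)
  have hβ : β = β' := by linarith [h 0 s hs, hρ, mul_eq_zero_of_left hρ s]
  have hu : u = u' := by linarith [h 0 s hs, h 1 s hs]
  exact hne (by rw [hβ, hu, sub_eq_zero.1 hρ])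

lemma residual_combination {a b : ℝ} (hab : a + b = 1) (β β' u u' g e : ℝ) :
    (a * u + b * u') * g + e - (a * β + b * β')
      = a * (u * g + e - β) + b * (u' * g + e - β') := by
  linear_combination -e * hab

lemma exists_moreau_residual_combination_lt (hf : (interior (subdiff f v)).Nonempty)
    {β β' u u' ρ ρ' a b : ℝ} (hρ : 0 ≤ ρ) (hρ' : 0 ≤ ρ') (hne : (β, u, ρ) ≠ (β', u', ρ'))
    (ha : 0 < a) (hb : 0 < b) (hab : a + b = 1) :
    ∃ z : ℝ × ℝ,
      moreau f ((a * u + b * u') * z.1 + z.2 - (a * β + b * β')) (a * ρ + b * ρ')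
        < a * moreau f (u * z.1 + z.2 - β) ρ + b * moreau f (u' * z.1 + z.2 - β') ρ' := by
  have hnontriv : (interior (subdiff f v)).Nontrivial :=
    (infinite_of_mem_nhds hf.some (isOpen_interior.mem_nhds hf.some_mem)).nontrivial
  obtain ⟨g, s, hs, hgs⟩ := exists_mem_mul_sub_ne_mul hnontriv hne
  set e := v + (a * ρ + b * ρ') * s - (a * u + b * u') * g + (a * β + b * β') with he
  have hcomb : a * (u * g + e - β) + b * (u' * g + e - β') = v + (a * ρ + b * ρ') * s := by
    linear_combination e * hab + he
  have hx : u * g + e - β ≠ v + ρ * s := by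
    intro h
    have hx' : u' * g + e - β' = v + ρ' * s :=
      mul_left_cancel₀ hb.ne' (by linear_combination hcomb - a * h - v * hab)
    exact hgs (by linear_combination h - hx')
  refine ⟨(g, e), ?_⟩
  rw [residual_combination hab]
  exact moreau_combination_lt hs hρ hρ' ha hb hab hcomb hx

lemma strictConvexOn_expectedMoreau [μ.IsOpenPosMeasure] (hf : ConvexOn ℝ Set.univ f)
    (hv : (interior (subdiff f v)).Nonempty)
    (hint : ∀ β u ρ : ℝ, 0 ≤ ρ → Integrable (fun z => moreau f (u * z.1 + z.2 - β) ρ) μ) :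
    StrictConvexOn ℝ (Set.univ ×ˢ Set.univ ×ˢ Set.Ici 0) (expectedMoreau f μ) := by
  refine strictConvexOn_integral (convex_univ.prod (convex_univ.prod (convex_Ici 0)))
    (fun z => ⟨convex_univ.prod (convex_univ.prod (convex_Ici 0)), ?_⟩) ?_ ?_ ?_
  · rintro p ⟨-, -, hp⟩ q ⟨-, -, hq⟩ a b ha hb hab
    simp only [Prod.fst_add, Prod.snd_add, Prod.smul_fst, Prod.smul_snd, smul_eq_mul,
      residual_combination hab]
    exact (convexOn_moreau hf).2 (x := (p.2.1 * z.1 + z.2 - p.1, p.2.2)) ⟨trivial, hp⟩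
      (y := (q.2.1 * z.1 + z.2 - q.1, q.2.2)) ⟨trivial, hq⟩ ha hb hab
  · rintro p ⟨-, -, hp⟩
    exact (continuous_moreau hf hp).comp (by fun_prop)
  · rintro p ⟨-, -, hp⟩
    exact hint _ _ _ hp
  · rintro p ⟨-, -, hp⟩ q ⟨-, -, hq⟩ hne a b ha hb hab
    exact exists_moreau_residual_combination_lt hv hp hq hne ha hb hab

end ExpectedMoreau

section Pinball

variable {τ : ℝ}

lemma pinball_eq_max (τ r : ℝ) : pinball τ r = max (τ * r) ((τ - 1) * r) := by
  rcases le_total r 0 with hr | hr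
  · rw [pinball, min_eq_left hr, max_eq_right (by linarith)]
    ring
  · rw [pinball, min_eq_right hr, max_eq_left (by linarith)]
    ring

lemma convexOn_pinball (τ : ℝ) : ConvexOn ℝ Set.univ (pinball τ) := by
  have h : ConvexOn ℝ Set.univ fun r => max (τ * r) ((τ - 1) * r) :=
    ((LinearMap.mulLeft ℝ τ).convexOn convex_univ).sup
      ((LinearMap.mulLeft ℝ (τ - 1)).convexOn convex_univ)
  exact h.congr fun r _ => (pinball_eq_max τ r).symm

lemma Icc_subset_subdiff_pinball (τ : ℝ) : Set.Icc (τ - 1) τ ⊆ subdiff (pinball τ) 0 := by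
  rintro s ⟨hs, hs'⟩ w
  rw [pinball_eq_max, pinball_eq_max]
  simp only [mul_zero, max_self, sub_zero, add_zero]
  rcases le_total w 0 with hw | hw
  · exact le_max_of_le_right (mul_le_mul_of_nonpos_right hs hw)
  · exact le_max_of_le_left (mul_le_mul_of_nonneg_right hs' hw)

lemma interior_subdiff_pinball_nonempty (τ : ℝ) :
    (interior (subdiff (pinball τ) 0)).Nonempty := by
  have h := interior_mono (Icc_subset_subdiff_pinball τ)
  rw [interior_Icc] at h
  exact (Set.nonempty_Ioo.2 (sub_one_lt τ)).mono h

lemma pinball_le_abs (hτ : τ ∈ Set.Icc 0 1) (r : ℝ) : pinball τ r ≤ |r| := by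
  rw [pinball_eq_max]
  refine max_le ?_ ?_
  · nlinarith [le_abs_self r, abs_nonneg r, hτ.1, hτ.2]
  · nlinarith [neg_le_abs r, abs_nonneg r, hτ.1, hτ.2]

lemma integrable_moreau_pinball {Ω : Type*} [MeasurableSpace Ω] {μ : Measure Ω} {X : Ω → ℝ}
    {ρ : ℝ} (hτ : τ ∈ Set.Icc 0 1) (hX : Integrable X μ) (hρ : 0 ≤ ρ) :
    Integrable (fun ω => moreau (pinball τ) (X ω) ρ) μ := by
  have hzero : (0 : ℝ) ∈ subdiff (pinball τ) 0 :=
    Icc_subset_subdiff_pinball τ ⟨sub_nonpos.2 hτ.2, hτ.1⟩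
  refine hX.mono ((continuous_moreau (convexOn_pinball τ) hρ).comp_aestronglyMeasurable hX.1)
    (ae_of_all _ fun ω => ?_)
  have hnonneg : 0 ≤ moreau (pinball τ) (X ω) ρ := by
    simpa [pinball] using le_moreau_of_affine_le (x := X ω) hzero hρ
  rw [Real.norm_of_nonneg hnonneg]
  exact (moreau_le_self hzero hρ).trans (pinball_le_abs hτ _)

end Pinball

section Regularizer

variable {Ω : Type*} [MeasurableSpace Ω] {μ : Measure Ω} {f : ℝ → ℝ} {X Y : Ω → ℝ}

lemma convexOn_integral_moreau (hf : ConvexOn ℝ Set.univ f)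
    (hint : ∀ c ρ : ℝ, 0 ≤ ρ → Integrable (fun ω => moreau f (c * X ω + Y ω) ρ) μ) :
    ConvexOn ℝ (Set.univ ×ˢ Set.Ici 0)
      fun q : ℝ × ℝ => ∫ ω, moreau f (q.1 * X ω + Y ω) q.2 ∂μ := by
  have hconv : Convex ℝ (Set.univ ×ˢ Set.Ici (0 : ℝ) : Set (ℝ × ℝ)) :=
    convex_univ.prod (convex_Ici 0)
  refine ⟨hconv, fun p hp q hq a b ha hb hab => ?_⟩
  have hp_int := (hint p.1 p.2 hp.2).const_mul a
  have hq_int := (hint q.1 q.2 hq.2).const_mul b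
  simp only [smul_eq_mul]
  rw [← integral_const_mul, ← integral_const_mul, ← integral_add hp_int hq_int]
  refine integral_mono (hint _ _ (hconv hp hq ha hb hab).2) (hp_int.add hq_int) fun ω => ?_
  have hcomb : (a • p + b • q).1 * X ω + Y ω
      = a * (p.1 * X ω + Y ω) + b * (q.1 * X ω + Y ω) := by
    simp only [Prod.fst_add, Prod.smul_fst, smul_eq_mul]
    linear_combination -Y ω * hab
  simp only [hcomb]
  exact (convexOn_moreau hf).2 (x := (p.1 * X ω + Y ω, p.2)) ⟨trivial, hp.2⟩
    (y := (q.1 * X ω + Y ω, q.2)) ⟨trivial, hq.2⟩ ha hb hab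

lemma integral_moreau_le (hf : ConvexOn ℝ Set.univ f)
    (hint : ∀ c ρ : ℝ, 0 ≤ ρ → Integrable (fun ω => moreau f (c * X ω + Y ω) ρ) μ)
    (hX : Integrable (fun ω => X ω ^ 2) μ) {η ρ : ℝ} (hρ : 0 ≤ ρ) :
    ∫ ω, moreau f (η * ρ * X ω + Y ω) ρ ∂μ
      ≤ η ^ 2 * ρ / 2 * ∫ ω, X ω ^ 2 ∂μ + ∫ ω, f (Y ω) ∂μ := by
  obtain ⟨k, c, hkc⟩ := exists_affine_le_of_convexOn hf
  have hY : Integrable (fun ω => f (Y ω)) μ := by simpa [moreau] using hint 0 0 le_rfl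
  rw [← integral_const_mul, ← integral_add (hX.const_mul _) hY]
  refine integral_mono (hint _ _ hρ) ((hX.const_mul _).add hY) fun ω => ?_
  exact moreau_le_of_sq_le hkc hρ (by positivity) (le_of_eq (by ring))

/-- The part of the asymptotic objective other than the expected loss, as a function of the
minimization variables `p = (β₀, M_u, ρ₁)` and the maximization variables `q = (M_η, ρ₂)`. -/
def asymReg (γ : ℝ) (Pβ : Measure ℝ) (ν : ℝ → ℝ) (p : ℝ × ℝ × ℝ) (q : ℝ × ℝ) : ℝ :=
  γ * (∫ z, moreau ν (q.1 * p.2.1 / q.2 * z.1 + γ * z.2) (p.2.1 / q.2)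
      ∂((gaussianReal 0 1).prod Pβ))
    - q.1 ^ 2 * p.2.1 * γ / (2 * q.2) + q.1 * p.2.2 / 2 - p.2.1 * q.2 / 2

variable {γ : ℝ} {Pβ : Measure ℝ} {ν : ℝ → ℝ}

lemma convexOn_asymReg (hγ : 0 ≤ γ) (hν : ConvexOn ℝ Set.univ ν)
    (hνfin : ∀ c ρ : ℝ, 0 ≤ ρ →
      Integrable (fun z : ℝ × ℝ => moreau ν (c * z.1 + γ * z.2) ρ) ((gaussianReal 0 1).prod Pβ))
    {q : ℝ × ℝ} (hq : 0 < q.2) :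
    ConvexOn ℝ (Set.univ ×ˢ Set.Ici 0 ×ˢ Set.Ici 0) fun p => asymReg γ Pβ ν p q := by
  let uCoord : ℝ × ℝ × ℝ →ₗ[ℝ] ℝ := LinearMap.fst ℝ ℝ ℝ ∘ₗ LinearMap.snd ℝ ℝ (ℝ × ℝ)
  let ρCoord : ℝ × ℝ × ℝ →ₗ[ℝ] ℝ := LinearMap.snd ℝ ℝ ℝ ∘ₗ LinearMap.snd ℝ ℝ (ℝ × ℝ)
  let envArg : ℝ × ℝ × ℝ →ₗ[ℝ] ℝ × ℝ := ((q.1 / q.2) • uCoord).prod (q.2⁻¹ • uCoord)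
  let linPart : ℝ × ℝ × ℝ →ₗ[ℝ] ℝ :=
    (q.1 / 2) • ρCoord - (q.1 ^ 2 * γ / (2 * q.2) + q.2 / 2) • uCoord
  have hS : Convex ℝ (Set.univ ×ˢ Set.Ici 0 ×ˢ Set.Ici 0 : Set (ℝ × ℝ × ℝ)) :=
    convex_univ.prod ((convex_Ici 0).prod (convex_Ici 0))
  have henv :=
    ((convexOn_integral_moreau hν hνfin).comp_linearMap envArg).subset
      (fun p hp => ⟨trivial, mul_nonneg (inv_nonneg.2 hq.le) hp.2.1⟩) hS
  have henvArg (p : ℝ × ℝ × ℝ) : envArg p = (q.1 * p.2.1 / q.2, p.2.1 / q.2) :=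
    Prod.ext (div_mul_eq_mul_div _ _ _) (inv_mul_eq_div _ _)
  have hlinPart (p : ℝ × ℝ × ℝ) :
      linPart p = q.1 / 2 * p.2.2 - (q.1 ^ 2 * γ / (2 * q.2) + q.2 / 2) * p.2.1 := rfl
  refine ((henv.smul hγ).add (linPart.convexOn hS)).congr fun p _ => ?_
  simp only [Pi.add_apply, Function.comp_apply, henvArg, hlinPart, smul_eq_mul, asymReg]
  ring

lemma integrable_sq_gaussianReal (m : ℝ) (v : NNReal) :
    Integrable (fun x => x ^ 2) (gaussianReal m v) :=
  (memLp_id_gaussianReal 2).integrable_sq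

lemma integral_sq_gaussianReal (v : NNReal) : ∫ x, x ^ 2 ∂(gaussianReal 0 v) = v := by
  have h := variance_fun_id_gaussianReal (μ := 0) (v := v)
  rwa [variance_of_integral_eq_zero aemeasurable_id' integral_id_gaussianReal] at h

/- The negative term `-M_η ^ 2 * M_u * γ / (2 * ρ₂)` exactly absorbs the Gaussian variance in the
envelope, which is what keeps the supremum over `ρ₂ → 0` finite. -/
lemma asymReg_le [IsProbabilityMeasure Pβ] (hγ : 0 ≤ γ) (hν : ConvexOn ℝ Set.univ ν)
    (hνfin : ∀ c ρ : ℝ, 0 ≤ ρ →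
      Integrable (fun z : ℝ × ℝ => moreau ν (c * z.1 + γ * z.2) ρ) ((gaussianReal 0 1).prod Pβ))
    {p : ℝ × ℝ × ℝ} {q : ℝ × ℝ} (hp : 0 ≤ p.2.1) (hq : 0 < q.2) :
    asymReg γ Pβ ν p q
      ≤ γ * ∫ z : ℝ × ℝ, ν (γ * z.2) ∂((gaussianReal 0 1).prod Pβ) + q.1 * p.2.2 / 2 := by
  have hle := mul_le_mul_of_nonneg_left (integral_moreau_le (η := q.1) hν hνfin
    ((integrable_sq_gaussianReal 0 1).comp_fst Pβ) (div_nonneg hp hq.le)) hγ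
  rw [integral_fun_fst (fun x : ℝ => x ^ 2), integral_sq_gaussianReal, probReal_univ, one_smul,
    NNReal.coe_one, mul_one, ← mul_div_assoc] at hle
  have habsorb : γ * (q.1 ^ 2 * (p.2.1 / q.2) / 2) = q.1 ^ 2 * p.2.1 * γ / (2 * q.2) := by field
  have hpq : 0 ≤ p.2.1 * q.2 := mul_nonneg hp hq.le
  rw [asymReg]
  linarith

end Regularizer

section Objective

variable {τ γ cη Cη C₂ : ℝ} {Pε Pβ : Measure ℝ} {ν : ℝ → ℝ}

lemma asymObj_eq_add (p : ℝ × ℝ × ℝ) (q : ℝ × ℝ) :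
    asymObj τ γ Pε Pβ ν p.1 p.2.1 p.2.2 q.1 q.2
      = expectedMoreau (pinball τ) ((gaussianReal 0 1).prod Pε) (p.1, p.2.1, p.2.2 / q.1)
        + asymReg γ Pβ ν p q := by
  rw [asymObj, expectedMoreau, asymReg]
  ring

lemma isOpenPosMeasure_gaussianReal (m : ℝ) {v : NNReal} (hv : v ≠ 0) :
    (gaussianReal m v).IsOpenPosMeasure :=
  (gaussianReal_absolutelyContinuous' m hv).isOpenPosMeasure

lemma strictConvexOn_expectedMoreau_pinball [IsFiniteMeasure Pε] [Pε.IsOpenPosMeasure]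
    (hτ : τ ∈ Set.Icc 0 1) (hPε : Integrable (fun x => x) Pε) :
    StrictConvexOn ℝ (Set.univ ×ˢ Set.univ ×ˢ Set.Ici 0)
      (expectedMoreau (pinball τ) ((gaussianReal 0 1).prod Pε)) := by
  have := isOpenPosMeasure_gaussianReal 0 one_ne_zero
  have hg : Integrable (fun x : ℝ => x) (gaussianReal 0 1) :=
    (memLp_id_gaussianReal 1).integrable le_rfl
  refine strictConvexOn_expectedMoreau (convexOn_pinball τ) (interior_subdiff_pinball_nonempty τ)
    fun β u ρ hρ => integrable_moreau_pinball hτ ?_ hρ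
  exact (((hg.comp_fst Pε).const_mul u).add (hPε.comp_snd (gaussianReal 0 1))).sub
    (integrable_const β)

theorem asymFmax_strictConvexOn_general (hτ : τ ∈ Set.Icc 0 1) (hγ : 0 ≤ γ)
    [IsFiniteMeasure Pε] [Pε.IsOpenPosMeasure] (hPε : Integrable (fun x => x) Pε)
    [IsProbabilityMeasure Pβ] (hν : ConvexOn ℝ Set.univ ν)
    (hνfin : ∀ c ρ : ℝ, 0 ≤ ρ →
      Integrable (fun z : ℝ × ℝ => moreau ν (c * z.1 + γ * z.2) ρ) ((gaussianReal 0 1).prod Pβ))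
    (hcη : 0 < cη) (hCη : cη ≤ Cη) (hC₂ : 0 < C₂) :
    StrictConvexOn ℝ (Set.univ ×ˢ Set.Ici 0 ×ˢ Set.Ici 0) (asymFmax τ γ Pε Pβ ν cη Cη C₂) := by
  have hloss := strictConvexOn_expectedMoreau_pinball hτ hPε
  have hS : Convex ℝ (Set.univ ×ˢ Set.Ici 0 ×ˢ Set.Ici 0 : Set (ℝ × ℝ × ℝ)) :=
    convex_univ.prod ((convex_Ici 0).prod (convex_Ici 0))
  unfold asymFmax
  simp only [asymObj_eq_add]
  refine strictConvexOn_sSup_image_add isCompact_Icc (Set.nonempty_Icc.2 hCη)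
    (Set.nonempty_Ioc.2 hC₂) ?_ ?_ ?_ ?_
    (L := fun (p : ℝ × ℝ × ℝ) η => expectedMoreau (pinball τ) ((gaussianReal 0 1).prod Pε)
      (p.1, p.2.1, p.2.2 / η))
  · exact fun η hη => (strictConvexOn_comp_div_snd_snd hloss (hcη.trans_le hη.1)).subset
      (fun p hp => ⟨trivial, trivial, hp.2.2⟩) hS
  · exact fun p hp => (continuousOn_div_snd_snd hloss.convexOn hp.2.2).mono
      fun η hη => hcη.trans_le hη.1
  · exact fun q hq => convexOn_asymReg hγ hν hνfin hq.2.1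
  · refine fun p hp =>
      ⟨γ * ∫ z : ℝ × ℝ, ν (γ * z.2) ∂((gaussianReal 0 1).prod Pβ) + Cη * p.2.2 / 2, ?_⟩
    rintro _ ⟨q, hq, rfl⟩
    refine (asymReg_le hγ hν hνfin hp.2.1 hq.2.1).trans ?_
    linarith [mul_le_mul_of_nonneg_right hq.1.2 hp.2.2]

end Objective

lemma NoiseAssumption.isOpenPosMeasure {Pε : Measure ℝ} (h : NoiseAssumption Pε) :
    Pε.IsOpenPosMeasure := by
  obtain ⟨f, hf, hpos, -, rfl⟩ := h.density
  have hvol : volume ≪ volume.withDensity fun x => ENNReal.ofReal (f x) :=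
    withDensity_absolutelyContinuous' (by fun_prop)
      (ae_of_all _ fun x => (ENNReal.ofReal_pos.2 (hpos x)).ne')
  exact hvol.isOpenPosMeasure

lemma NoiseAssumption.integrable_id {Pε : Measure ℝ} [IsFiniteMeasure Pε]
    (h : NoiseAssumption Pε) : Integrable (fun x => x) Pε :=
  ((memLp_two_iff_integrable_sq aestronglyMeasurable_id).2 h.second_moment).integrable one_le_two

/-- Lemma 12 of the paper, strict convexity of the partially maximized
asymptotic objective.  Fix `C_η > c_η > 0` and `C₂ > 0`.  Then
`(β₀, M_u, ρ₁) ↦ max_{M_η ∈ [c_η, C_η], ρ₂ ∈ (0, C₂]} A(β₀, M_u, ρ₁, M_η, ρ₂)` is jointly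
strictly convex on `ℝ × ℝ_{≥0} × ℝ_{>0}`, and at `ρ₁ = 0` it is jointly strictly convex in
`(β₀, M_u)` on `ℝ × ℝ_{≥0}`. -/
theorem asymFmax_strictConvexOn
    (τ γ : ℝ) (hτ : τ ∈ Set.Ioo (0 : ℝ) 1) (hγ : γ ∈ Set.Ioo (0 : ℝ) (2 / Real.pi))
    (Pε Pβ : Measure ℝ) [IsProbabilityMeasure Pε] [IsProbabilityMeasure Pβ]
    (hPε : NoiseAssumption Pε) (hPβ2 : Integrable (fun x => x ^ 2) Pβ)
    (ν : ℝ → ℝ) (hν : ConvexOn ℝ Set.univ ν)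
    (hνfin : ∀ (c ρ : ℝ), 0 ≤ ρ →
      Integrable (fun z : ℝ × ℝ => moreau ν (c * z.1 + γ * z.2) ρ)
        ((gaussianReal 0 1).prod Pβ))
    (hνcont : ContinuousOn
      (fun q : ℝ × ℝ =>
        ∫ z, moreau ν (q.1 * z.1 + γ * z.2) q.2 ∂((gaussianReal 0 1).prod Pβ))
      (Set.univ ×ˢ Set.Ici 0))
    (cη Cη C₂ : ℝ) (hcη : 0 < cη) (hCη : cη < Cη) (hC₂ : 0 < C₂) :
    StrictConvexOn ℝ (Set.univ ×ˢ Set.Ici (0 : ℝ) ×ˢ Set.Ioi (0 : ℝ))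
      (asymFmax τ γ Pε Pβ ν cη Cη C₂) ∧
    StrictConvexOn ℝ (Set.univ ×ˢ Set.Ici (0 : ℝ))
      (fun p : ℝ × ℝ => asymFmax τ γ Pε Pβ ν cη Cη C₂ (p.1, p.2, 0)) := by
  have := hPε.isOpenPosMeasure
  have hF : StrictConvexOn ℝ (Set.univ ×ˢ Set.Ici 0 ×ˢ Set.Ici 0)
      (asymFmax τ γ Pε Pβ ν cη Cη C₂) :=
    asymFmax_strictConvexOn_general (Set.Ioo_subset_Icc_self hτ) hγ.1.le hPε.integrable_id hν hνfin
      hcη hCη.le hC₂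
  constructor
  · exact hF.subset (fun p hp => ⟨trivial, hp.2.1, Set.Ioi_subset_Ici_self hp.2.2⟩)
      (convex_univ.prod ((convex_Ici 0).prod (convex_Ioi 0)))
  · exact (strictConvexOn_comp_linearMap hF (LinearMap.id.prodMap (LinearMap.inl ℝ ℝ ℝ))
      (Function.injective_id.prodMap LinearMap.inl_injective)).subset
      (fun p hp => ⟨trivial, hp.2, le_refl (0 : ℝ)⟩) (convex_univ.prod (convex_Ici 0))

end
end
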